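/- arXiv:0911.4838 — 2 statements merged into one kernel-verified Lean document; each statement's English description precedes it below -/
import Mathlib

section
/- For every D₀ > 0 there exist positive constants C and D̃ such that for every D > D̃, every B > D₀^{18}, every m ∈ ℤ with δ̃₁ < −D and |δ̃₁| ≤ D₀·B^{1/6}, and every ψ in the form domain of q_m: q_m[ψ] ≥ (Θ₀ + C·D^{1/2}·B^{−1/3})·‖ψ‖². -/
noncomputable section
open MeasureTheory Real Filter Set Topology

/-- The de Gennes energy `λ₁^𝒢(ξ)`. -/
def deGennes (ξ : ℝ) : ℝ :=
  sInf { q : ℝ | ∃ u : ℝ → ℂ, ContDiff ℝ 1 u ∧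
    IntegrableOn (fun t => ‖u t‖ ^ 2) (Ioi 0) ∧
    IntegrableOn (fun t => ‖deriv u t‖ ^ 2 + (t + ξ) ^ 2 * ‖u t‖ ^ 2) (Ioi 0) ∧
    0 < (∫ t in Ioi (0:ℝ), ‖u t‖ ^ 2) ∧
    q = (∫ t in Ioi (0:ℝ), (‖deriv u t‖ ^ 2 + (t + ξ) ^ 2 * ‖u t‖ ^ 2)) /
        ∫ t in Ioi (0:ℝ), ‖u t‖ ^ 2 }

/-- `Θ₀`, the infimum of the de Gennes energy. -/
def Theta0 : ℝ := ⨅ ξ : ℝ, deGennes ξ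

/-- The half plane `ℝ²₊ = {(τ, ρ) : τ > 0}`. -/
def halfPlane : Set (ℝ × ℝ) := Ioi (0:ℝ) ×ˢ (univ : Set ℝ)

/-- The potential of the effective operator `Q_m(B)`. -/
def qPot (B : ℝ) (m : ℤ) (p : ℝ × ℝ) : ℝ :=
  (p.1 + ((m : ℝ) - B / 2) / Real.sqrt B + B ^ (-(1:ℝ)/6) * p.2 ^ 2 / 2) ^ 2

/-- The integrand of the quadratic form `q_m`. -/
def qIntegrand (B : ℝ) (m : ℤ) (ψ : ℝ × ℝ → ℂ) (p : ℝ × ℝ) : ℝ :=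
  ‖fderiv ℝ ψ p (1, 0)‖ ^ 2 + qPot B m p * ‖ψ p‖ ^ 2
    + B ^ (-(1:ℝ)/3) * ‖fderiv ℝ ψ p (0, 1)‖ ^ 2

/-- The quadratic form `q_m[ψ]`. -/
def qForm (B : ℝ) (m : ℤ) (ψ : ℝ × ℝ → ℂ) : ℝ :=
  ∫ p in halfPlane, qIntegrand B m ψ p

/-- Membership in the form domain of `q_m`. -/
def InFormDomain (B : ℝ) (m : ℤ) (ψ : ℝ × ℝ → ℂ) : Prop :=
  ContDiff ℝ 1 ψ ∧ IntegrableOn (fun p => ‖ψ p‖ ^ 2) halfPlane ∧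
    IntegrableOn (qIntegrand B m ψ) halfPlane

/-- The rescaled momentum `δ̃₁ = ((m - B/2)/√B - ξ₀)·B^{1/6}`. -/
def delta1 (B : ℝ) (m : ℤ) (ξ₀ : ℝ) : ℝ :=
  (((m : ℝ) - B / 2) / Real.sqrt B - ξ₀) * B ^ ((1:ℝ)/6)

/-- Second derivative in the `τ` direction. -/
def d2τ (ψ : ℝ × ℝ → ℂ) (p : ℝ × ℝ) : ℂ :=
  fderiv ℝ (fun q => fderiv ℝ ψ q ((1:ℝ), (0:ℝ))) p (1, 0)

/-- Second derivative in the `ρ` direction. -/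
def d2ρ (ψ : ℝ × ℝ → ℂ) (p : ℝ × ℝ) : ℂ :=
  fderiv ℝ (fun q => fderiv ℝ ψ q ((0:ℝ), (1:ℝ))) p (0, 1)

/-- An eigenfunction of the model operator `Q_m(B)` on the half plane, with Neumann
boundary condition at `τ = 0`, eigenvalue `lam`, which is nonzero, smooth up to the
boundary, and lies in `L²` together with its first derivatives. -/
def IsQEigenfunction (B : ℝ) (m : ℤ) (lam : ℝ) (ψ : ℝ × ℝ → ℂ) : Prop :=
  ContDiff ℝ (⊤ : ℕ∞) ψ ∧
  IntegrableOn (fun p => ‖ψ p‖ ^ 2) halfPlane ∧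
  IntegrableOn (fun p => ‖fderiv ℝ ψ p ((1:ℝ), (0:ℝ))‖ ^ 2) halfPlane ∧
  IntegrableOn (fun p => ‖fderiv ℝ ψ p ((0:ℝ), (1:ℝ))‖ ^ 2) halfPlane ∧
  0 < (∫ p in halfPlane, ‖ψ p‖ ^ 2) ∧
  (∀ p ∈ halfPlane,
    -d2τ ψ p - ((B ^ (-(1:ℝ)/3) : ℝ) : ℂ) * d2ρ ψ p + ((qPot B m p : ℝ) : ℂ) * ψ p
      = (lam : ℂ) * ψ p) ∧
  (∀ ρ : ℝ, fderiv ℝ ψ ((0:ℝ), ρ) ((1:ℝ), (0:ℝ)) = 0)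

/-- admissible functions -/
def Adm (ξ a : ℝ) (u : ℝ → ℂ) : Prop :=
  ContDiff ℝ 1 u ∧ IntegrableOn (fun t => ‖u t‖ ^ 2) (Ioi a) ∧
    IntegrableOn (fun t => ‖deriv u t‖ ^ 2 + (t + ξ) ^ 2 * ‖u t‖ ^ 2) (Ioi a)

def NN (a : ℝ) (u : ℝ → ℂ) : ℝ := ∫ t in Ioi a, ‖u t‖ ^ 2

def QQ (ξ a : ℝ) (u : ℝ → ℂ) : ℝ :=
  ∫ t in Ioi a, (‖deriv u t‖ ^ 2 + (t + ξ) ^ 2 * ‖u t‖ ^ 2)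

lemma NN_nonneg (a : ℝ) (u : ℝ → ℂ) : 0 ≤ NN a u :=
  integral_nonneg (fun t => by positivity)

lemma QQ_nonneg (ξ a : ℝ) (u : ℝ → ℂ) : 0 ≤ QQ ξ a u :=
  integral_nonneg (fun t => by simp only [Pi.zero_apply]; positivity)

lemma deGennes_nonneg (ξ : ℝ) : 0 ≤ deGennes ξ := by
  apply Real.sInf_nonneg
  rintro q ⟨u, -, -, -, h, rfl⟩
  exact div_nonneg (QQ_nonneg ξ 0 u) h.le

lemma Theta0_nonneg : 0 ≤ Theta0 := Real.iInf_nonneg deGennes_nonneg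

lemma Theta0_le_adm {ξ : ℝ} {u : ℝ → ℂ} (hu : Adm ξ 0 u) : Theta0 * NN 0 u ≤ QQ ξ 0 u := by
  rcases (NN_nonneg 0 u).eq_or_lt with h | h
  · rw [← h, mul_zero]; exact QQ_nonneg _ _ _
  · have h1 : Theta0 ≤ deGennes ξ := ciInf_le ⟨0, by rintro _ ⟨x, rfl⟩; exact deGennes_nonneg x⟩ ξ
    have h2 : deGennes ξ ≤ QQ ξ 0 u / NN 0 u := by
      apply csInf_le
      · refine ⟨0, ?_⟩
        rintro q ⟨u, -, -, -, h, rfl⟩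
        exact div_nonneg (QQ_nonneg ξ 0 u) h.le
      · exact ⟨u, hu.1, hu.2.1, hu.2.2, h, rfl⟩
    have := h1.trans h2
    rwa [le_div_iff₀ h] at this

lemma intOn_shift {f : ℝ → ℝ} {a : ℝ} (hf : IntegrableOn f (Ioi a)) :
    IntegrableOn (fun t => f (t + a)) (Ioi 0) := by
  have h := ((measurePreserving_add_right volume a).integrableOn_comp_preimage
    (measurableEmbedding_addRight a) (f := f) (s := Ioi a)).2 hf
  simpa [Function.comp_def] using h

lemma int_shift (f : ℝ → ℝ) (a : ℝ) :
    ∫ t in Ioi 0, f (t + a) = ∫ t in Ioi a, f t := by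
  have h := (measurePreserving_add_right volume a).setIntegral_preimage_emb
    (measurableEmbedding_addRight a) f (Ioi a)
  simpa using h

lemma Theta0_le_adm' {ξ a : ℝ} {u : ℝ → ℂ} (hu : Adm ξ a u) : Theta0 * NN a u ≤ QQ ξ a u := by
  have hd : deriv (fun t => u (t + a)) = fun t => deriv u (t + a) := by
    ext t; exact deriv_comp_add_const u a t
  have h2 : (fun t => ‖deriv (fun t => u (t + a)) t‖ ^ 2 + (t + (ξ + a)) ^ 2 * ‖u (t + a)‖ ^ 2)
      = fun t => (fun s => ‖deriv u s‖ ^ 2 + (s + ξ) ^ 2 * ‖u s‖ ^ 2) (t + a) := by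
    ext t; simp only [hd]; ring
  have hA : Adm (ξ + a) 0 (fun t => u (t + a)) := by
    refine ⟨hu.1.comp (by fun_prop), intOn_shift hu.2.1, ?_⟩
    rw [h2]; exact intOn_shift hu.2.2
  have h := Theta0_le_adm hA
  have e1 : NN 0 (fun t => u (t + a)) = NN a u := int_shift (fun t => ‖u t‖ ^ 2) a
  have e2 : QQ (ξ + a) 0 (fun t => u (t + a)) = QQ ξ a u := by
    unfold QQ; rw [h2]
    exact int_shift (fun s => ‖deriv u s‖ ^ 2 + (s + ξ) ^ 2 * ‖u s‖ ^ 2) a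
  rwa [e1, e2] at h

lemma hasDeriv_normsq {u : ℝ → ℂ} (hu : ContDiff ℝ 1 u) (t : ℝ) :
    HasDerivAt (fun t => ‖u t‖ ^ 2) (2 * inner ℝ (u t) (deriv u t)) t :=
  ((hu.differentiable one_ne_zero t).hasDerivAt).norm_sq

lemma pt_ineq (x y : ℂ) (g : ℝ) : 2 * g * inner ℝ x y ≤ ‖y‖ ^ 2 + g ^ 2 * ‖x‖ ^ 2 := by
  have h := norm_sub_sq_real y (g • x)
  rw [inner_smul_right, norm_smul, mul_pow, Real.norm_eq_abs, sq_abs, real_inner_comm] at h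
  nlinarith [sq_nonneg ‖y - g • x‖]

/-- the harmonic oscillator bound -/
lemma osc_bound {ξ : ℝ} {u : ℝ → ℂ} (hu : Adm ξ 0 u) :
    NN 0 u + ξ * ‖u 0‖ ^ 2 ≤ QQ ξ 0 u := by
  obtain ⟨hc, h1, h2⟩ := hu
  have cu : Continuous u := hc.continuous
  have cd : Continuous (deriv u) := hc.continuous_deriv le_rfl
  have hF : ∀ t, HasDerivAt (fun t => (t + ξ) * ‖u t‖ ^ 2)
      (‖u t‖ ^ 2 + (t + ξ) * (2 * inner ℝ (u t) (deriv u t))) t := by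
    intro t
    have := ((hasDerivAt_id t).add_const ξ).mul (hasDeriv_normsq hc t)
    refine HasDerivAt.congr_deriv this ?_
    simp
  have i1 : IntegrableOn (fun t => (t + ξ) * ‖u t‖ ^ 2) (Ioi 0) := by
    refine Integrable.mono' (h1.add h2) (by fun_prop) (ae_of_all _ fun t => ?_)
    simp only [Pi.add_apply, norm_mul, Real.norm_eq_abs, norm_pow, abs_norm]
    have : |t + ξ| ≤ 1 + (t + ξ) ^ 2 := by
      rw [← sq_abs]; nlinarith [sq_nonneg (|t + ξ| - 1)]
    nlinarith [mul_le_mul_of_nonneg_right this (sq_nonneg ‖u t‖), sq_nonneg ‖deriv u t‖]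
  have i2 : IntegrableOn (fun t => ‖u t‖ ^ 2 + (t + ξ) * (2 * inner ℝ (u t) (deriv u t)))
      (Ioi 0) := by
    refine Integrable.mono' (h1.add h2) (by fun_prop) (ae_of_all _ fun t => ?_)
    simp only [Pi.add_apply, Real.norm_eq_abs]
    rw [abs_le]
    constructor <;> nlinarith [pt_ineq (u t) (deriv u t) (t + ξ),
      pt_ineq (u t) (deriv u t) (-(t + ξ)), sq_nonneg ‖u t‖]
  have lim := tendsto_zero_of_hasDerivAt_of_integrableOn_Ioi (fun x _ => hF x) i2 i1
  have hI := integral_Ioi_of_hasDerivAt_of_tendsto' (a := 0) (fun x _ => hF x) i2 lim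
  have hsum := integral_add h2 i2
  have : NN 0 u ≤ QQ ξ 0 u + (0 - (0 + ξ) * ‖u 0‖ ^ 2) := by
    rw [← hI]; unfold QQ; rw [← hsum]; unfold NN
    refine integral_mono h1 (h2.add i2) fun t => ?_
    simp only
    nlinarith [pt_ineq (u t) (deriv u t) (-(t + ξ))]
  linarith

/-- restriction to a smaller half line -/
lemma restr_bound {ξ h : ℝ} {u : ℝ → ℂ} (hh : 0 ≤ h) (hu : Adm ξ 0 u) (g g' : ℝ → ℝ)
    (hg : ∀ t, HasDerivAt g (g' t) t) (hg' : Continuous g') (hgh : g h = 0)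
    (hle : ∀ t ∈ Icc 0 h, g' t + g t ^ 2 ≤ (t + ξ) ^ 2 - Theta0) :
    Theta0 * NN 0 u - g 0 * ‖u 0‖ ^ 2 ≤ QQ ξ 0 u := by
  obtain ⟨hc, h1, h2⟩ := hu
  have cu : Continuous u := hc.continuous
  have cd : Continuous (deriv u) := hc.continuous_deriv le_rfl
  have cg : Continuous g := continuous_iff_continuousAt.2 fun t => (hg t).continuousAt
  have sub : Ioi h ⊆ Ioi 0 := Ioi_subset_Ioi hh
  have hA : Adm ξ h u := ⟨hc, h1.mono_set sub, h2.mono_set sub⟩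
  have hT := Theta0_le_adm' hA
  have e1 : (∫ t in (0:ℝ)..h, ‖u t‖ ^ 2) + NN h u = NN 0 u :=
    intervalIntegral.integral_interval_add_Ioi h1 hA.2.1
  have e2 : (∫ t in (0:ℝ)..h, (‖deriv u t‖ ^ 2 + (t + ξ) ^ 2 * ‖u t‖ ^ 2)) + QQ ξ h u
      = QQ ξ 0 u :=
    intervalIntegral.integral_interval_add_Ioi h2 hA.2.2
  have hF : ∀ t, HasDerivAt (fun t => g t * ‖u t‖ ^ 2)
      (g' t * ‖u t‖ ^ 2 + g t * (2 * inner ℝ (u t) (deriv u t))) t := by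
    intro t
    exact (hg t).mul (hasDeriv_normsq hc t)
  have hI := intervalIntegral.integral_eq_sub_of_hasDerivAt (a := 0) (b := h) (fun x _ => hF x)
    (Continuous.intervalIntegrable (by fun_prop) _ _)
  have hm : ∫ t in (0:ℝ)..h, (Theta0 * ‖u t‖ ^ 2 +
        (g' t * ‖u t‖ ^ 2 + g t * (2 * inner ℝ (u t) (deriv u t))))
      ≤ ∫ t in (0:ℝ)..h, (‖deriv u t‖ ^ 2 + (t + ξ) ^ 2 * ‖u t‖ ^ 2) := by
    refine intervalIntegral.integral_mono_on hh
      (Continuous.intervalIntegrable (by fun_prop) _ _)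
      (Continuous.intervalIntegrable (by fun_prop) _ _) fun t ht => ?_
    nlinarith [pt_ineq (u t) (deriv u t) (g t), hle t ht, sq_nonneg ‖u t‖,
      mul_le_mul_of_nonneg_right (hle t ht) (sq_nonneg ‖u t‖)]
  rw [intervalIntegral.integral_add (Continuous.intervalIntegrable (by fun_prop) _ _)
    (Continuous.intervalIntegrable (by fun_prop) _ _), hI, hgh,
    intervalIntegral.integral_const_mul] at hm
  rw [← e1, ← e2, mul_add]
  linarith

/-- extension to a larger half line -/
lemma ext_bound_n {ξ h n : ℝ} {u : ℝ → ℂ} (hh : 0 < h) (hn : 0 < n) (hu : Adm ξ 0 u) :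
    Theta0 * (NN 0 u + h * (‖u 0‖ ^ 2 - 2 * ‖u 0‖ * (‖deriv u 0‖ * n⁻¹))) ≤
      QQ ξ 0 u + (‖deriv u 0‖ ^ 2 * n⁻¹ + (‖u 0‖ + ‖deriv u 0‖ * n⁻¹) ^ 2 *
        (h * ξ ^ 2 - h ^ 2 * ξ + h ^ 3 / 3)) := by
  obtain ⟨hc, h1, h2⟩ := hu
  have cu : Continuous u := hc.continuous
  have cd : Continuous (deriv u) := hc.continuous_deriv le_rfl
  set w : ℝ → ℂ := fun s => ((Real.exp (n * min s 0) : ℝ) : ℂ) * deriv u (max s 0) with hw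
  have cw : Continuous w := by fun_prop
  set v : ℝ → ℂ := fun t => u 0 + ∫ s in (0:ℝ)..t, w s with hv
  have dv : ∀ t, HasDerivAt v (w t) t := fun t =>
    (intervalIntegral.integral_hasDerivAt_right (cw.intervalIntegrable _ _)
      (cw.stronglyMeasurableAtFilter _ _) cw.continuousAt).const_add (u 0)
  have dv' : deriv v = w := funext fun t => (dv t).deriv
  have cv : ContDiff ℝ 1 v := by
    rw [contDiff_one_iff_deriv, dv']
    exact ⟨fun t => (dv t).differentiableAt, cw⟩
  have cvc : Continuous v := cv.continuous
  -- on the right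
  have wr : ∀ t, 0 ≤ t → w t = deriv u t := by
    intro t ht; simp [hw, ht]
  have vr : ∀ t, 0 ≤ t → v t = u t := by
    intro t ht
    have : ∫ s in (0:ℝ)..t, w s = ∫ s in (0:ℝ)..t, deriv u s := by
      apply intervalIntegral.integral_congr
      intro s hs
      rw [uIcc_of_le ht] at hs
      exact wr s hs.1
    simp only [hv, this]
    rw [intervalIntegral.integral_deriv_eq_sub (fun x _ => hc.differentiable one_ne_zero x)
      (cd.intervalIntegrable _ _)]
    ring
  -- on the left
  have wl : ∀ t, t ≤ 0 → w t = ((Real.exp (n * t) : ℝ) : ℂ) * deriv u 0 := by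
    intro t ht; simp [hw, ht]
  have nwl : ∀ t, t ≤ 0 → ‖w t‖ = Real.exp (n * t) * ‖deriv u 0‖ := by
    intro t ht
    rw [wl t ht, norm_mul, Complex.norm_real, Real.norm_eq_abs, abs_of_pos (Real.exp_pos _)]
  have iexp : ∀ t, t ≤ 0 → ∫ s in t..(0:ℝ), Real.exp (n * s) ≤ n⁻¹ := by
    intro t ht
    have hd : ∀ s ∈ uIcc t 0, HasDerivAt (fun s => Real.exp (n * s) * n⁻¹) (Real.exp (n * s)) s := by
      intro s _
      have := (((hasDerivAt_id s).const_mul n).exp).mul_const n⁻¹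
      refine HasDerivAt.congr_deriv this ?_
      simp; field_simp
    rw [intervalIntegral.integral_eq_sub_of_hasDerivAt hd
      (Continuous.intervalIntegrable (by fun_prop) _ _)]
    simp only [mul_zero, Real.exp_zero, one_mul]
    have : 0 ≤ Real.exp (n * t) * n⁻¹ := by positivity
    linarith
  have vl : ∀ t, t ≤ 0 → ‖v t - u 0‖ ≤ ‖deriv u 0‖ * n⁻¹ := by
    intro t ht
    simp only [hv, add_sub_cancel_left]
    rw [intervalIntegral.integral_symm, norm_neg]
    refine (intervalIntegral.norm_integral_le_integral_norm ht).trans ?_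
    have : ∫ s in t..(0:ℝ), ‖w s‖ = ∫ s in t..(0:ℝ), Real.exp (n * s) * ‖deriv u 0‖ := by
      apply intervalIntegral.integral_congr
      intro s hs
      rw [uIcc_of_le ht] at hs
      exact nwl s hs.2
    rw [this, intervalIntegral.integral_mul_const, mul_comm]
    exact mul_le_mul_of_nonneg_left (iexp t ht) (norm_nonneg _)
  -- integrability
  have r1 : EqOn (fun t => ‖v t‖ ^ 2) (fun t => ‖u t‖ ^ 2) (Ioi 0) := by
    intro t ht; simp only [vr t (le_of_lt ht)]
  have r2 : EqOn (fun t => ‖deriv v t‖ ^ 2 + (t + ξ) ^ 2 * ‖v t‖ ^ 2)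
      (fun t => ‖deriv u t‖ ^ 2 + (t + ξ) ^ 2 * ‖u t‖ ^ 2) (Ioi 0) := by
    intro t ht; simp only [vr t (le_of_lt ht), dv', wr t (le_of_lt ht)]
  have j1 : IntegrableOn (fun t => ‖v t‖ ^ 2) (Ioi 0) := h1.congr_fun r1.symm measurableSet_Ioi
  have j2 : IntegrableOn (fun t => ‖deriv v t‖ ^ 2 + (t + ξ) ^ 2 * ‖v t‖ ^ 2) (Ioi 0) :=
    h2.congr_fun r2.symm measurableSet_Ioi
  have cdv : Continuous (deriv v) := by rw [dv']; exact cw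
  have hun : Ioc (-h) 0 ∪ Ioi 0 = Ioi (-h) := Ioc_union_Ioi_eq_Ioi (by linarith)
  have k1 : IntegrableOn (fun t => ‖v t‖ ^ 2) (Ioi (-h)) := by
    rw [← hun]
    exact (Continuous.integrableOn_Ioc (by fun_prop)).union j1
  have k2 : IntegrableOn (fun t => ‖deriv v t‖ ^ 2 + (t + ξ) ^ 2 * ‖v t‖ ^ 2) (Ioi (-h)) := by
    rw [← hun]
    exact (Continuous.integrableOn_Ioc (by fun_prop)).union j2
  have hT := Theta0_le_adm' (ξ := ξ) (a := -h) (u := v) ⟨cv, k1, k2⟩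
  have e1 : (∫ t in (-h)..(0:ℝ), ‖v t‖ ^ 2) + NN 0 v = NN (-h) v :=
    intervalIntegral.integral_interval_add_Ioi k1 j1
  have e2 : (∫ t in (-h)..(0:ℝ), (‖deriv v t‖ ^ 2 + (t + ξ) ^ 2 * ‖v t‖ ^ 2)) + QQ ξ 0 v
      = QQ ξ (-h) v :=
    intervalIntegral.integral_interval_add_Ioi k2 j2
  have e3 : NN 0 v = NN 0 u := setIntegral_congr_fun measurableSet_Ioi r1
  have e4 : QQ ξ 0 v = QQ ξ 0 u := setIntegral_congr_fun measurableSet_Ioi r2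
  set d := ‖deriv u 0‖ with hd
  have dn : 0 ≤ d * n⁻¹ := by positivity
  have m1 : h * (‖u 0‖ ^ 2 - 2 * ‖u 0‖ * (d * n⁻¹)) ≤ ∫ t in (-h)..(0:ℝ), ‖v t‖ ^ 2 := by
    have : ∫ t in (-h)..(0:ℝ), (‖u 0‖ ^ 2 - 2 * ‖u 0‖ * (d * n⁻¹)) ≤
        ∫ t in (-h)..(0:ℝ), ‖v t‖ ^ 2 := by
      refine intervalIntegral.integral_mono_on (by linarith)
        (Continuous.intervalIntegrable (by fun_prop) _ _)
        (Continuous.intervalIntegrable (by fun_prop) _ _) fun t ht => ?_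
      have a1 := vl t ht.2
      have a2 : ‖u 0‖ - ‖v t‖ ≤ ‖v t - u 0‖ := by
        rw [norm_sub_rev]; exact norm_sub_norm_le _ _
      nlinarith [norm_nonneg (u 0), norm_nonneg (v t), sq_nonneg (‖u 0‖ - ‖v t‖),
        mul_nonneg (norm_nonneg (u 0)) (sub_nonneg.2 (a2.trans a1))]
    rw [intervalIntegral.integral_const, smul_eq_mul, zero_sub, neg_neg] at this
    exact this
  have m2 : ∫ t in (-h)..(0:ℝ), (‖deriv v t‖ ^ 2 + (t + ξ) ^ 2 * ‖v t‖ ^ 2) ≤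
      d ^ 2 * n⁻¹ + (‖u 0‖ + d * n⁻¹) ^ 2 * (h * ξ ^ 2 - h ^ 2 * ξ + h ^ 3 / 3) := by
    have b1 : ∫ t in (-h)..(0:ℝ), (‖deriv v t‖ ^ 2 + (t + ξ) ^ 2 * ‖v t‖ ^ 2) ≤
        ∫ t in (-h)..(0:ℝ), (d ^ 2 * Real.exp (n * t) + (‖u 0‖ + d * n⁻¹) ^ 2 * (t + ξ) ^ 2) := by
      refine intervalIntegral.integral_mono_on (by linarith)
        (Continuous.intervalIntegrable (by fun_prop) _ _)
        (Continuous.intervalIntegrable (by fun_prop) _ _) fun t ht => ?_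
      have a1 := vl t ht.2
      have a2 : ‖v t‖ - ‖u 0‖ ≤ ‖v t - u 0‖ := norm_sub_norm_le _ _
      have a3 : ‖v t‖ ^ 2 ≤ (‖u 0‖ + d * n⁻¹) ^ 2 :=
        pow_le_pow_left₀ (norm_nonneg _) (by linarith) 2
      have a4 : ‖deriv v t‖ ^ 2 ≤ d ^ 2 * Real.exp (n * t) := by
        rw [dv', nwl t ht.2]
        have : Real.exp (n * t) ≤ 1 := Real.exp_le_one_iff.2 (by nlinarith [ht.2])
        have h0 := Real.exp_pos (n * t)
        calc (Real.exp (n * t) * d) ^ 2 = d ^ 2 * (Real.exp (n * t) * Real.exp (n * t)) := by ring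
          _ ≤ d ^ 2 * (Real.exp (n * t) * 1) := by gcongr
          _ = _ := by ring
      have a5 := mul_le_mul_of_nonneg_left a3 (sq_nonneg (t + ξ))
      linarith
    refine b1.trans ?_
    rw [intervalIntegral.integral_add (Continuous.intervalIntegrable (by fun_prop) _ _)
      (Continuous.intervalIntegrable (by fun_prop) _ _), intervalIntegral.integral_const_mul,
      intervalIntegral.integral_const_mul]
    have b2 : ∫ t in (-h)..(0:ℝ), (t + ξ) ^ 2 = h * ξ ^ 2 - h ^ 2 * ξ + h ^ 3 / 3 := by
      rw [intervalIntegral.integral_comp_add_right (fun x => x ^ 2), integral_pow]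
      norm_num; ring
    rw [b2]
    have := mul_le_mul_of_nonneg_left (iexp (-h) (by linarith)) (sq_nonneg d)
    linarith
  rw [← e1, ← e2, e3, e4] at hT
  have := mul_le_mul_of_nonneg_left m1 Theta0_nonneg
  linarith

lemma ext_bound {ξ h : ℝ} {u : ℝ → ℂ} (hh : 0 < h) (hu : Adm ξ 0 u) :
    Theta0 * (NN 0 u + h * ‖u 0‖ ^ 2) ≤
      QQ ξ 0 u + ‖u 0‖ ^ 2 * (h * ξ ^ 2 - h ^ 2 * ξ + h ^ 3 / 3) := by
  have key : ∀ᶠ n : ℝ in atTop, _ := (eventually_gt_atTop (0:ℝ)).mono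
    fun n hn => ext_bound_n (n := n) hh hn hu
  have hi : Tendsto (fun n : ℝ => n⁻¹) atTop (𝓝 0) := tendsto_inv_atTop_zero
  have c1 : Continuous fun x : ℝ =>
    Theta0 * (NN 0 u + h * (‖u 0‖ ^ 2 - 2 * ‖u 0‖ * (‖deriv u 0‖ * x))) := by fun_prop
  have c2 : Continuous fun x : ℝ => QQ ξ 0 u + (‖deriv u 0‖ ^ 2 * x + (‖u 0‖ + ‖deriv u 0‖ * x) ^ 2 *
        (h * ξ ^ 2 - h ^ 2 * ξ + h ^ 3 / 3)) := by fun_prop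
  have := le_of_tendsto_of_tendsto ((c1.tendsto 0).comp hi) ((c2.tendsto 0).comp hi) key
  simpa using this

lemma gauss_int : Integrable (fun t : ℝ => Real.exp (-t ^ 2)) := by
  simpa using integrable_exp_neg_mul_sq (b := 1) one_pos

lemma gauss_int1 : Integrable (fun t : ℝ => t * Real.exp (-t ^ 2)) := by
  simpa using integrable_mul_exp_neg_mul_sq (b := 1) one_pos

lemma gauss_int2 : Integrable (fun t : ℝ => t ^ 2 * Real.exp (-t ^ 2)) := by
  have := integrable_rpow_mul_exp_neg_mul_sq (b := 1) one_pos (s := 2) (by norm_num)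
  simpa using this

def gau : ℝ → ℂ := fun t => ((Real.exp (-t ^ 2 / 2) : ℝ) : ℂ)

lemma gau_deriv (t : ℝ) : HasDerivAt gau (((-t * Real.exp (-t ^ 2 / 2) : ℝ)) : ℂ) t := by
  have : HasDerivAt (fun t : ℝ => Real.exp (-t ^ 2 / 2)) (-t * Real.exp (-t ^ 2 / 2)) t := by
    have := ((((hasDerivAt_id t).pow 2).neg).div_const 2).exp
    refine HasDerivAt.congr_deriv this ?_
    simp; ring
  exact this.ofReal_comp

lemma gau_sq (t : ℝ) : ‖gau t‖ ^ 2 = Real.exp (-t ^ 2) := by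
  rw [gau, Complex.norm_real, Real.norm_eq_abs, sq_abs, ← Real.exp_nat_mul]
  congr 1; push_cast; ring

lemma gau_dsq (t : ℝ) : ‖deriv gau t‖ ^ 2 = t ^ 2 * Real.exp (-t ^ 2) := by
  rw [(gau_deriv t).deriv, Complex.norm_real, Real.norm_eq_abs, sq_abs, mul_pow,
    ← Real.exp_nat_mul, neg_sq]
  congr 2; push_cast; ring

lemma gau_adm (ξ : ℝ) : Adm ξ 0 gau := by
  refine ⟨?_, ?_, ?_⟩
  · rw [contDiff_one_iff_deriv]
    refine ⟨fun t => (gau_deriv t).differentiableAt, ?_⟩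
    have : deriv gau = fun t => (((-t * Real.exp (-t ^ 2 / 2) : ℝ)) : ℂ) :=
      funext fun t => (gau_deriv t).deriv
    rw [this]; fun_prop
  · simp_rw [gau_sq]; exact gauss_int.integrableOn
  · simp_rw [gau_sq, gau_dsq]
    have := ((gauss_int2.const_mul 2).add (gauss_int1.const_mul (2 * ξ))).add
      (gauss_int.const_mul (ξ ^ 2))
    refine Integrable.integrableOn (this.congr (ae_of_all _ fun t => ?_))
    simp only [Pi.add_apply]; ring

lemma gau_NN_pos : 0 < NN 0 gau := by
  unfold NN
  simp_rw [gau_sq]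
  have := integral_gaussian_Ioi 1
  simp only [neg_mul, one_mul] at this
  rw [this]; positivity

lemma gau_QQ (ξ : ℝ) : QQ ξ 0 gau = (1 + ξ ^ 2) * NN 0 gau + ξ := by
  unfold QQ NN
  simp_rw [gau_sq, gau_dsq]
  have hF : ∀ t : ℝ, HasDerivAt (fun t => -(t + ξ) * Real.exp (-t ^ 2))
      ((-1 + 2 * t ^ 2 + 2 * ξ * t) * Real.exp (-t ^ 2)) t := by
    intro t
    have h1 := (((hasDerivAt_id t).pow 2).neg).exp
    have := (((hasDerivAt_id t).add_const ξ).neg).mul h1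
    refine HasDerivAt.congr_deriv this ?_
    simp; ring
  have i1 : IntegrableOn (fun t => -(t + ξ) * Real.exp (-t ^ 2)) (Ioi 0) := by
    have := (gauss_int1.const_mul (-1)).add (gauss_int.const_mul (-ξ))
    refine Integrable.integrableOn (this.congr (ae_of_all _ fun t => ?_))
    simp only [Pi.add_apply]; ring
  have i2 : IntegrableOn (fun t => (-1 + 2 * t ^ 2 + 2 * ξ * t) * Real.exp (-t ^ 2)) (Ioi 0) := by
    have := ((gauss_int2.const_mul 2).add (gauss_int1.const_mul (2 * ξ))).add
      (gauss_int.const_mul (-1))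
    refine Integrable.integrableOn (this.congr (ae_of_all _ fun t => ?_))
    simp only [Pi.add_apply]; ring
  have lim := tendsto_zero_of_hasDerivAt_of_integrableOn_Ioi (fun x _ => hF x) i2 i1
  have hI := integral_Ioi_of_hasDerivAt_of_tendsto' (a := 0) (fun x _ => hF x) i2 lim
  have hs := integral_add ((gauss_int.integrableOn (s := Ioi 0)).const_mul (1 + ξ ^ 2)) i2
  rw [hI, integral_const_mul] at hs
  simp at hs
  rw [← hs]
  congr 1; ext t; ring

lemma Theta0_lt_one : Theta0 < 1 := by
  have hN := gau_NN_pos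
  set N := NN 0 gau with hNd
  have h := Theta0_le_adm (gau_adm (-(1 / (2 * N))))
  rw [gau_QQ, ← hNd] at h
  have e : (1 + (-(1 / (2 * N))) ^ 2) * N + -(1 / (2 * N)) = N - 1 / (4 * N) := by
    field_simp; ring
  rw [e] at h
  have : 0 < 1 / (4 * N) := by positivity
  by_contra hc
  push Not at hc
  nlinarith

lemma near_min {ξ₀ : ℝ} (hξ₀ : deGennes ξ₀ = Theta0) {η : ℝ} (hη : 0 < η) :
    ∃ u, Adm ξ₀ 0 u ∧ 0 < NN 0 u ∧ QQ ξ₀ 0 u < (Theta0 + η) * NN 0 u := by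
  have h1 : deGennes ξ₀ < Theta0 + η := by linarith
  have hne : Set.Nonempty { q : ℝ | ∃ u : ℝ → ℂ, ContDiff ℝ 1 u ∧
    IntegrableOn (fun t => ‖u t‖ ^ 2) (Ioi 0) ∧
    IntegrableOn (fun t => ‖deriv u t‖ ^ 2 + (t + ξ₀) ^ 2 * ‖u t‖ ^ 2) (Ioi 0) ∧
    0 < (∫ t in Ioi (0:ℝ), ‖u t‖ ^ 2) ∧
    q = (∫ t in Ioi (0:ℝ), (‖deriv u t‖ ^ 2 + (t + ξ₀) ^ 2 * ‖u t‖ ^ 2)) /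
        ∫ t in Ioi (0:ℝ), ‖u t‖ ^ 2 } :=
    ⟨_, gau, (gau_adm ξ₀).1, (gau_adm ξ₀).2.1, (gau_adm ξ₀).2.2, gau_NN_pos, rfl⟩
  obtain ⟨q, ⟨u, a1, a2, a3, a4, rfl⟩, hq⟩ := exists_lt_of_csInf_lt hne h1
  refine ⟨u, ⟨a1, a2, a3⟩, a4, ?_⟩
  rwa [div_lt_iff₀ a4] at hq

lemma xi0_neg {ξ₀ : ℝ} (hξ₀ : deGennes ξ₀ = Theta0) : ξ₀ < 0 := by
  by_contra hc
  push Not at hc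
  obtain ⟨u, hu, hN, hQ⟩ := near_min hξ₀ (η := 1 - Theta0) (by linarith [Theta0_lt_one])
  have := osc_bound hu
  have := mul_nonneg hc (sq_nonneg ‖u 0‖)
  linarith

lemma no_gain {ξ₀ : ℝ} (hξ₀ : deGennes ξ₀ = Theta0) {d : ℝ} (hd : 0 < d)
    (H : ∀ u, Adm ξ₀ 0 u → Theta0 * NN 0 u + d * ‖u 0‖ ^ 2 ≤ QQ ξ₀ 0 u) : False := by
  have hneg := xi0_neg hξ₀
  have h1 := Theta0_lt_one
  have hs : 0 < d - ξ₀ := by linarith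
  obtain ⟨u, hu, hN, hQ⟩ := near_min hξ₀ (η := d * (1 - Theta0) / (d - ξ₀))
    (div_pos (mul_pos hd (by linarith)) hs)
  set η := d * (1 - Theta0) / (d - ξ₀) with hη
  have he : η * (d - ξ₀) = d * (1 - Theta0) := by rw [hη]; field_simp
  have a1 := osc_bound hu
  have a2 := H u hu
  have b1 : d * ‖u 0‖ ^ 2 < η * NN 0 u := by linarith
  have b2 : (1 - Theta0 - η) * NN 0 u < -ξ₀ * ‖u 0‖ ^ 2 := by linarith
  have c1 := mul_lt_mul_of_pos_left b1 (show 0 < -ξ₀ by linarith)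
  have c2 := mul_lt_mul_of_pos_left b2 hd
  have c3 : d * ((1 - Theta0 - η) * NN 0 u) = -ξ₀ * (η * NN 0 u) := by
    have : d * (1 - Theta0 - η) = -ξ₀ * η := by linarith
    rw [← mul_assoc, this]; ring
  have c4 : d * (-ξ₀ * ‖u 0‖ ^ 2) = -ξ₀ * (d * ‖u 0‖ ^ 2) := by ring
  linarith

lemma xi0_sq {ξ₀ : ℝ} (hξ₀ : deGennes ξ₀ = Theta0) : Theta0 = ξ₀ ^ 2 := by
  have hneg := xi0_neg hξ₀
  apply le_antisymm
  · by_contra hc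
    push Not at hc
    set e := Theta0 - ξ₀ ^ 2 with he
    have hep : 0 < e := by linarith
    set h := min 1 (e / (2 * (1 - ξ₀))) with hh
    have hpos : 0 < h := lt_min one_pos (div_pos hep (by linarith))
    have h1 : h ≤ 1 := min_le_left _ _
    have h2 : h * (2 * (1 - ξ₀)) ≤ e := by
      rw [← le_div_iff₀ (by linarith)]; exact min_le_right _ _
    refine no_gain hξ₀ (d := h * (e / 4)) (by positivity) fun u hu => ?_
    have := ext_bound hpos hu
    have k : h * ξ₀ ^ 2 - h ^ 2 * ξ₀ + h ^ 3 / 3 ≤ h * Theta0 - h * (e / 4) := by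
      have : ξ₀ ^ 2 - h * ξ₀ + h ^ 2 / 3 ≤ Theta0 - e / 4 := by nlinarith
      nlinarith [mul_le_mul_of_nonneg_left this hpos.le]
    nlinarith [mul_le_mul_of_nonneg_left k (sq_nonneg ‖u 0‖)]
  · by_contra hc
    push Not at hc
    set e := ξ₀ ^ 2 - Theta0 with he
    have hep : 0 < e := by linarith
    set h := e / (4 * -ξ₀) with hh
    have hpos : 0 < h := div_pos hep (by linarith)
    have h2 : h * (4 * -ξ₀) = e := div_mul_cancel₀ _ (by linarith)
    set κ := e / (2 * (1 + e * h ^ 2)) with hκ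
    have hκ0 : 0 < κ := by positivity
    have hκe : κ * (2 * (1 + e * h ^ 2)) = e := div_mul_cancel₀ _ (by positivity)
    refine no_gain hξ₀ (d := κ * h) (by positivity) fun u hu => ?_
    have := restr_bound hpos.le hu (fun t => -κ * (h - t)) (fun _ => κ) ?_ continuous_const ?_ ?_
    · linarith
    · intro t
      refine HasDerivAt.congr_deriv (((hasDerivAt_id t).const_sub h).const_mul (-κ)) ?_
      simp
    · simp
    · intro t ht
      have a1 : (h - t) ^ 2 ≤ h ^ 2 := by nlinarith [ht.1, ht.2]
      have a2 : κ ≤ e / 2 := by nlinarith [mul_pos hκ0 (mul_pos hep (pow_pos hpos 2))]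
      have a3 : κ + κ ^ 2 * h ^ 2 ≤ e / 2 := by
        have : κ * (κ * h ^ 2) ≤ κ * (e / 2 * h ^ 2) := by gcongr
        nlinarith [mul_pos hκ0 (mul_pos hep (pow_pos hpos 2))]
      have a4 : t * (-ξ₀) ≤ h * (-ξ₀) := mul_le_mul_of_nonneg_right ht.2 (by linarith)
      nlinarith [mul_le_mul_of_nonneg_left a1 (sq_nonneg κ), sq_nonneg t]

/-- nondegeneracy of the de Gennes minimum -/
lemma nondeg {ξ₀ : ℝ} (hξ₀ : deGennes ξ₀ = Theta0) {D₀ : ℝ} (hD₀ : 0 < D₀) :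
    ∃ c : ℝ, 0 < c ∧ ∀ ξ, ξ₀ - D₀ ≤ ξ → ∀ u, Adm ξ 0 u →
      (Theta0 + c * min 1 ((ξ - ξ₀) ^ 2)) * NN 0 u ≤ QQ ξ 0 u := by
  have hneg := xi0_neg hξ₀
  have hsq := xi0_sq hξ₀
  have hT1 := Theta0_lt_one
  set x := -ξ₀ with hx
  have hxp : 0 < x := by linarith
  set κ := x / (2 + x * D₀ ^ 3) with hκ
  have hκ0 : 0 < κ := by positivity
  have hκe : κ * (2 + x * D₀ ^ 3) = x := div_mul_cancel₀ _ (by positivity)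
  have hκx : 2 * κ ≤ x := by
    have : 0 < κ * (x * D₀ ^ 3) := by positivity
    linarith
  set L := x + D₀ with hL
  have hL0 : 0 < L := by positivity
  have key : ∀ ξ, ξ₀ - D₀ ≤ ξ → ξ < 0 → ∀ u, Adm ξ 0 u →
      Theta0 * NN 0 u + κ * (ξ - ξ₀) ^ 2 * ‖u 0‖ ^ 2 ≤ QQ ξ 0 u := by
    intro ξ h1 h2 u hu
    rcases lt_or_ge ξ₀ ξ with h | h
    · have := ext_bound (h := ξ - ξ₀) (by linarith) hu
      have k : κ * (ξ - ξ₀) ^ 2 ≤ (ξ - ξ₀) * Theta0 -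
          ((ξ - ξ₀) * ξ ^ 2 - (ξ - ξ₀) ^ 2 * ξ + (ξ - ξ₀) ^ 3 / 3) := by
        have e : (ξ - ξ₀) * Theta0 -
          ((ξ - ξ₀) * ξ ^ 2 - (ξ - ξ₀) ^ 2 * ξ + (ξ - ξ₀) ^ 3 / 3)
          = (ξ - ξ₀) ^ 2 * (-ξ₀ - (ξ - ξ₀) / 3) := by rw [hsq]; ring
        rw [e, mul_comm]
        exact mul_le_mul_of_nonneg_left (by linarith) (sq_nonneg _)
      nlinarith [mul_le_mul_of_nonneg_left k (sq_nonneg ‖u 0‖)]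
    · set h := ξ₀ - ξ with hh
      have := restr_bound (h := h) (by linarith) hu (fun t => -κ * (h - t) ^ 2)
        (fun t => 2 * κ * (h - t)) ?_ (by fun_prop) ?_ ?_
      · have e : (ξ - ξ₀) ^ 2 = h ^ 2 := by rw [hh]; ring
        rw [e]; simp only [sub_zero] at this; linarith
      · intro t
        refine HasDerivAt.congr_deriv ((((hasDerivAt_id t).const_sub h).pow 2).const_mul (-κ)) ?_
        simp; ring
      · simp
      · intro t ht
        set s := h - t with hs
        have s0 : 0 ≤ s := by linarith [ht.2]
        have s1 : s ≤ D₀ := by linarith [ht.1]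
        have e : t + ξ = ξ₀ - s := by rw [hs, hh]; ring
        rw [e, hsq]
        have s3 : s ^ 3 ≤ D₀ ^ 3 := pow_le_pow_left₀ s0 s1 3
        have q : 2 * κ + κ ^ 2 * s ^ 3 ≤ 2 * x := by
          have q1 : κ ^ 2 * s ^ 3 ≤ κ ^ 2 * D₀ ^ 3 := by gcongr
          have q2 : κ * (κ * D₀ ^ 3) ≤ κ * (x * D₀ ^ 3) := by gcongr; linarith
          nlinarith
        nlinarith [mul_le_mul_of_nonneg_right q s0]
  refine ⟨κ * (1 - Theta0) / (κ + L), div_pos (mul_pos hκ0 (by linarith)) (by positivity), ?_⟩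
  intro ξ hξ u hu
  set c := κ * (1 - Theta0) / (κ + L) with hc
  have hce : c * (κ + L) = κ * (1 - Theta0) := div_mul_cancel₀ _ (by positivity)
  have hc0 : 0 < c := div_pos (mul_pos hκ0 (by linarith)) (by positivity)
  have hN := NN_nonneg 0 u
  have osc := osc_bound hu
  set m := min 1 ((ξ - ξ₀) ^ 2) with hm
  have m0 : 0 ≤ m := le_min zero_le_one (sq_nonneg _)
  have m1 : m ≤ 1 := min_le_left _ _
  have m2 : m ≤ (ξ - ξ₀) ^ 2 := min_le_right _ _
  have cle : c ≤ 1 - Theta0 := by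
    have : c * κ ≤ (1 - Theta0) * κ := by nlinarith
    exact le_of_mul_le_mul_right this hκ0
  rcases lt_or_ge ξ 0 with h | h
  · have K := key ξ hξ h u hu
    set b := ‖u 0‖ ^ 2 with hb
    have b0 : 0 ≤ b := sq_nonneg _
    have o2 : NN 0 u - L * b ≤ QQ ξ 0 u := by nlinarith
    have k2 : Theta0 * NN 0 u + κ * m * b ≤ QQ ξ 0 u := by
      have : κ * m * b ≤ κ * (ξ - ξ₀) ^ 2 * b := by gcongr
      linarith
    have km : 0 ≤ κ * m := by positivity
    have s := add_le_add (mul_le_mul_of_nonneg_left o2 km) (mul_le_mul_of_nonneg_left k2 hL0.le)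
    have t : (κ * m + L) * (Theta0 * NN 0 u + c * m * NN 0 u) ≤ (κ * m + L) * QQ ξ 0 u := by
      have t1 : (κ * m + L) * (c * m * NN 0 u) ≤ κ * m * (1 - Theta0) * NN 0 u := by
        have : (κ * m + L) * c ≤ κ * (1 - Theta0) := by nlinarith [mul_pos hc0 hκ0]
        calc _ = ((κ * m + L) * c) * (m * NN 0 u) := by ring
          _ ≤ (κ * (1 - Theta0)) * (m * NN 0 u) := by gcongr
          _ = _ := by ring
      linarith
    have := le_of_mul_le_mul_left t (by positivity)
    linarith
  · have : (Theta0 + c * m) * NN 0 u ≤ 1 * NN 0 u := by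
      gcongr
      nlinarith
    nlinarith [mul_nonneg h (sq_nonneg ‖u 0‖)]

lemma line_bound {φ : ℝ → ℂ} (hφ : ContDiff ℝ 1 φ) (h1 : Integrable (fun t => ‖φ t‖ ^ 2))
    (h2 : Integrable (fun t => ‖deriv φ t‖ ^ 2)) (g g' : ℝ → ℝ)
    (hg : ∀ t, HasDerivAt g (g' t) t) (hg' : Continuous g') (M : ℝ)
    (hM : ∀ t, |g t| ≤ M) (hM' : ∀ t, |g' t| ≤ M) :
    ∫ t, (-g' t - g t ^ 2) * ‖φ t‖ ^ 2 ≤ ∫ t, ‖deriv φ t‖ ^ 2 := by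
  have cu : Continuous φ := hφ.continuous
  have cd : Continuous (deriv φ) := hφ.continuous_deriv le_rfl
  have cg : Continuous g := continuous_iff_continuousAt.2 fun t => (hg t).continuousAt
  have hF : ∀ t, HasDerivAt (fun t => g t * ‖φ t‖ ^ 2)
      (g' t * ‖φ t‖ ^ 2 + g t * (2 * inner ℝ (φ t) (deriv φ t))) t := by
    intro t
    exact (hg t).mul (hasDeriv_normsq hφ t)
  have hg2 : ∀ t, g t ^ 2 ≤ M ^ 2 := fun t => by
    rw [← sq_abs]; exact pow_le_pow_left₀ (abs_nonneg _) (hM t) 2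
  have i1 : Integrable (fun t => g t * ‖φ t‖ ^ 2) := by
    refine Integrable.mono' (h1.const_mul M) (by fun_prop) (ae_of_all _ fun t => ?_)
    rw [Real.norm_eq_abs, abs_mul, abs_of_nonneg (sq_nonneg ‖φ t‖)]
    exact mul_le_mul_of_nonneg_right (hM t) (sq_nonneg _)
  have i2 : Integrable (fun t => g' t * ‖φ t‖ ^ 2 + g t * (2 * inner ℝ (φ t) (deriv φ t))) := by
    refine Integrable.mono' ((h1.const_mul (M + M ^ 2)).add h2) (by fun_prop)
      (ae_of_all _ fun t => ?_)
    simp only [Pi.add_apply, Real.norm_eq_abs]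
    have := abs_le.1 (hM' t)
    have a1 := mul_le_mul_of_nonneg_right this.1 (sq_nonneg ‖φ t‖)
    have a2 := mul_le_mul_of_nonneg_right this.2 (sq_nonneg ‖φ t‖)
    have a3 := mul_le_mul_of_nonneg_right (hg2 t) (sq_nonneg ‖φ t‖)
    rw [abs_le]
    constructor <;> nlinarith [pt_ineq (φ t) (deriv φ t) (g t),
      pt_ineq (φ t) (deriv φ t) (-(g t))]
  have i3 : Integrable (fun t => (-g' t - g t ^ 2) * ‖φ t‖ ^ 2) := by
    refine Integrable.mono' (h1.const_mul (M + M ^ 2)) (by fun_prop)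
      (ae_of_all _ fun t => ?_)
    rw [Real.norm_eq_abs, abs_mul, abs_of_nonneg (sq_nonneg ‖φ t‖)]
    refine mul_le_mul_of_nonneg_right ?_ (sq_nonneg _)
    have := abs_le.1 (hM' t)
    have := hg2 t
    rw [abs_le]
    constructor <;> nlinarith [sq_nonneg (g t), sq_nonneg M]
  have hI := integral_eq_zero_of_hasDerivAt_of_integrable hF i2 i1
  have hs := integral_add i3 i2
  rw [hI, add_zero] at hs
  rw [← hs]
  refine integral_mono (i3.add i2) h2 fun t => ?_
  simp only
  nlinarith [pt_ineq (φ t) (deriv φ t) (g t)]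

def GG (r : ℝ) : ℝ := (r ^ 3 - 2 * r) / (1 + r ^ 2) ^ 2
def GG' (r : ℝ) : ℝ := (-r ^ 4 + 9 * r ^ 2 - 2) / (1 + r ^ 2) ^ 3
def RR (r : ℝ) : ℝ := (r ^ 2 - 2) ^ 2 / (1 + r ^ 2) ^ 2

lemma GG_deriv (r : ℝ) : HasDerivAt GG (GG' r) r := by
  have hp : (1 + r ^ 2) ≠ 0 := by positivity
  have h1 : HasDerivAt (fun r : ℝ => r ^ 3 - 2 * r) (3 * r ^ 2 - 2) r := by
    refine HasDerivAt.congr_deriv (((hasDerivAt_id r).pow 3).sub ((hasDerivAt_id r).const_mul 2)) ?_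
    simp
  have h2 : HasDerivAt (fun r : ℝ => (1 + r ^ 2) ^ 2) (4 * r * (1 + r ^ 2)) r := by
    refine HasDerivAt.congr_deriv ((((hasDerivAt_id r).pow 2).const_add 1).pow 2) ?_
    simp; ring
  refine HasDerivAt.congr_deriv (h1.div h2 (by positivity)) ?_
  unfold GG'
  field_simp
  ring

lemma GG'_cont : Continuous GG' := by
  unfold GG'
  exact Continuous.div (by fun_prop) (by fun_prop) fun r => by positivity

lemma GG_sq (r : ℝ) : GG r ^ 2 ≤ RR r / 4 := by
  unfold GG RR
  rw [div_pow, div_div, div_le_div_iff₀ (by positivity) (by positivity)]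
  have : (r ^ 3 - 2 * r) ^ 2 * ((1 + r ^ 2) ^ 2 * 4)
      = ((r ^ 2 - 2) ^ 2 * (1 + r ^ 2) ^ 2) * (4 * r ^ 2) := by ring
  rw [this]
  have : (r ^ 2 - 2) ^ 2 * ((1 + r ^ 2) ^ 2) ^ 2
      = ((r ^ 2 - 2) ^ 2 * (1 + r ^ 2) ^ 2) * (1 + r ^ 2) ^ 2 := by ring
  rw [this]
  apply mul_le_mul_of_nonneg_left _ (by positivity)
  nlinarith [sq_nonneg (r ^ 2 - 1)]

lemma RR_le (r : ℝ) : RR r ≤ 4 := by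
  unfold RR
  rw [div_le_iff₀ (by positivity)]
  nlinarith [sq_nonneg r, sq_nonneg (r ^ 2)]

lemma RR_nonneg (r : ℝ) : 0 ≤ RR r := by unfold RR; positivity

lemma RR_le' (r : ℝ) : RR r ≤ (r ^ 2 - 2) ^ 2 := by
  unfold RR
  apply div_le_self (sq_nonneg _)
  nlinarith [sq_nonneg r, sq_nonneg (r ^ 2)]

lemma GG_bd (r : ℝ) : |GG r| ≤ 9 := by
  apply abs_le_of_sq_le_sq _ (by norm_num)
  linarith [GG_sq r, RR_le r]

lemma GG'_bd (r : ℝ) : |GG' r| ≤ 9 := by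
  unfold GG'
  rw [abs_le]
  constructor
  · rw [le_div_iff₀ (by positivity)]
    nlinarith [sq_nonneg r, sq_nonneg (r ^ 2), pow_nonneg (sq_nonneg r) 3]
  · rw [div_le_iff₀ (by positivity)]
    nlinarith [sq_nonneg r, sq_nonneg (r ^ 2), pow_nonneg (sq_nonneg r) 3]

lemma GG'_RR (r : ℝ) : 1 / 10 ≤ GG' r + RR r := by
  have : GG' r + RR r = (r ^ 6 - 4 * r ^ 4 + 9 * r ^ 2 + 2) / (1 + r ^ 2) ^ 3 := by
    have hp : (1 + r ^ 2) ≠ 0 := by positivity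
    unfold GG' RR
    field_simp
    ring
  rw [this, le_div_iff₀ (by positivity)]
  nlinarith [sq_nonneg r, mul_nonneg (sq_nonneg r) (sq_nonneg (r ^ 2 - 43 / 18)),
    mul_nonneg (sq_nonneg r) (sq_nonneg r)]

lemma well_bound {κ c₁ σ : ℝ} (hκ : 0 < κ) (hκ1 : κ ≤ 1) (hκc : κ ≤ c₁) (hσ : 2 ≤ σ) (ρ : ℝ) :
    κ / 10 * σ + (-κ * σ * GG' (ρ / σ)) + (-κ * σ ^ 2 * GG (ρ / σ)) ^ 2
      ≤ c₁ * σ ^ 4 * RR (ρ / σ) := by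
  set r := ρ / σ
  have a1 := GG'_RR r
  have a2 := GG_sq r
  have a3 := RR_nonneg r
  have hc : 0 < c₁ := by linarith
  have k1 : κ ^ 2 ≤ c₁ := by nlinarith
  have k2 : (-κ * σ ^ 2 * GG r) ^ 2 ≤ c₁ * σ ^ 4 * RR r / 4 := by
    calc (-κ * σ ^ 2 * GG r) ^ 2 = κ ^ 2 * σ ^ 4 * GG r ^ 2 := by ring
      _ ≤ c₁ * σ ^ 4 * (RR r / 4) := by gcongr
      _ = _ := by ring
  have k3 : κ * σ * RR r ≤ c₁ * σ ^ 4 * RR r / 2 := by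
    have : 2 ≤ σ ^ 3 := by nlinarith [sq_nonneg (σ - 2), sq_nonneg σ]
    calc κ * σ * RR r ≤ c₁ * σ * RR r := by gcongr
      _ = c₁ * σ * RR r * 2 / 2 := by ring
      _ ≤ c₁ * σ * RR r * σ ^ 3 / 2 := by gcongr
      _ = _ := by ring
  have k4 : κ * σ * (1 / 10) ≤ κ * σ * (GG' r + RR r) := by gcongr
  have k5 : 0 ≤ c₁ * σ ^ 4 * RR r := by positivity
  linarith

lemma fderiv_slice1 {ψ : ℝ × ℝ → ℂ} (h : ContDiff ℝ 1 ψ) (ρ t : ℝ) :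
    deriv (fun t => ψ (t, ρ)) t = fderiv ℝ ψ (t, ρ) (1, 0) := by
  have h1 := (h.differentiable one_ne_zero (t, ρ)).hasFDerivAt
  have h2 : HasDerivAt (fun t : ℝ => (t, ρ)) ((1 : ℝ), (0 : ℝ)) t :=
    (hasDerivAt_id t).prodMk (hasDerivAt_const t ρ)
  exact (h1.comp_hasDerivAt t h2).deriv

lemma fderiv_slice2 {ψ : ℝ × ℝ → ℂ} (h : ContDiff ℝ 1 ψ) (τ t : ℝ) :
    deriv (fun t => ψ (τ, t)) t = fderiv ℝ ψ (τ, t) (0, 1) := by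
  have h1 := (h.differentiable one_ne_zero (τ, t)).hasFDerivAt
  have h2 : HasDerivAt (fun t : ℝ => (τ, t)) ((0 : ℝ), (1 : ℝ)) t :=
    (hasDerivAt_const t τ).prodMk (hasDerivAt_id t)
  exact (h1.comp_hasDerivAt t h2).deriv

lemma vol_half : (volume : Measure (ℝ × ℝ)).restrict halfPlane
    = (volume.restrict (Ioi (0:ℝ))).prod (volume : Measure ℝ) := by
  unfold halfPlane
  rw [Measure.volume_eq_prod, ← Measure.prod_restrict, Measure.restrict_univ]

lemma bdd_int {f : ℝ → ℝ} (hf : Continuous f) {M : ℝ} (hM : ∀ t, |f t| ≤ M) {P : ℝ × ℝ → ℝ}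
    (hP0 : ∀ p, 0 ≤ P p) (hPc : Continuous P) {μ : Measure (ℝ × ℝ)} (hP : Integrable P μ) :
    Integrable (fun p => f p.2 * P p) μ := by
  refine Integrable.mono' (hP.const_mul M) (by fun_prop) (ae_of_all _ fun p => ?_)
  rw [Real.norm_eq_abs, abs_mul, abs_of_nonneg (hP0 p)]
  exact mul_le_mul_of_nonneg_right (hM p.2) (hP0 p)

lemma assemble {B : ℝ} {m : ℤ} {ψ : ℝ × ℝ → ℂ} (hB : 0 < B) (hψ : InFormDomain B m ψ)
    (s Λ M : ℝ) (hs : s = ((m : ℝ) - B / 2) / Real.sqrt B)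
    (W g g' : ℝ → ℝ) (hW : Continuous W) (hg : ∀ t, HasDerivAt g (g' t) t) (hg' : Continuous g')
    (hWM : ∀ t, |W t| ≤ M) (hM : ∀ t, |g t| ≤ M) (hM' : ∀ t, |g' t| ≤ M)
    (h1 : ∀ ρ u, Adm (s + B ^ (-(1:ℝ)/6) * ρ ^ 2 / 2) 0 u →
      W ρ * NN 0 u ≤ QQ (s + B ^ (-(1:ℝ)/6) * ρ ^ 2 / 2) 0 u)
    (h2 : ∀ ρ, Λ ≤ W ρ + B ^ (-(1:ℝ)/3) * (-g' ρ - g ρ ^ 2)) :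
    Λ * (∫ p in halfPlane, ‖ψ p‖ ^ 2) ≤ qForm B m ψ := by
  obtain ⟨hc, hP, hQ⟩ := hψ
  unfold qForm
  unfold IntegrableOn at hP hQ
  rw [vol_half] at hP hQ ⊢
  set μ := (volume.restrict (Ioi (0:ℝ))).prod (volume : Measure ℝ) with hμ
  set E := B ^ (-(1:ℝ)/3) with hE
  have hE0 : 0 < E := Real.rpow_pos_of_pos hB _
  have cψ : Continuous ψ := hc.continuous
  have cf : Continuous (fderiv ℝ ψ) := hc.continuous_fderiv one_ne_zero
  have cg : Continuous g := continuous_iff_continuousAt.2 fun t => (hg t).continuousAt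
  set T : ℝ × ℝ → ℝ := fun p => ‖fderiv ℝ ψ p (1, 0)‖ ^ 2 + qPot B m p * ‖ψ p‖ ^ 2 with hT
  set Z : ℝ × ℝ → ℝ := fun p => ‖fderiv ℝ ψ p (0, 1)‖ ^ 2 with hZ
  have cT : Continuous T := by
    have : Continuous (qPot B m) := by unfold qPot; fun_prop
    fun_prop
  have cZ : Continuous Z := by fun_prop
  have T0 : ∀ p, 0 ≤ T p := fun p => by
    have : 0 ≤ qPot B m p := by unfold qPot; positivity
    positivity
  have Z0 : ∀ p, 0 ≤ Z p := fun p => by positivity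
  have qe : qIntegrand B m ψ = fun p => T p + E * Z p := rfl
  rw [qe] at hQ ⊢
  have iT : Integrable T μ := by
    refine Integrable.mono' hQ cT.aestronglyMeasurable (ae_of_all _ fun p => ?_)
    rw [Real.norm_eq_abs, abs_of_nonneg (T0 p)]
    have := mul_nonneg hE0.le (Z0 p)
    linarith
  have iZ : Integrable Z μ := by
    refine Integrable.mono' (hQ.const_mul E⁻¹) cZ.aestronglyMeasurable (ae_of_all _ fun p => ?_)
    rw [Real.norm_eq_abs, abs_of_nonneg (Z0 p), mul_add, inv_mul_cancel_left₀ hE0.ne']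
    have := mul_nonneg (inv_pos.2 hE0).le (T0 p)
    linarith
  set P : ℝ × ℝ → ℝ := fun p => ‖ψ p‖ ^ 2 with hPd
  have cP : Continuous P := by fun_prop
  have P0 : ∀ p, 0 ≤ P p := fun p => by positivity
  have iW : Integrable (fun p => W p.2 * P p) μ := bdd_int hW hWM P0 cP hP
  have iG : Integrable (fun p => (-g' p.2 - g p.2 ^ 2) * P p) μ := by
    refine bdd_int (f := fun t => -g' t - g t ^ 2) (M := M + M ^ 2) (by fun_prop) (fun t => ?_)
      P0 cP hP
    have a1 := abs_le.1 (hM' t)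
    have a2 : g t ^ 2 ≤ M ^ 2 := by
      rw [← sq_abs]; exact pow_le_pow_left₀ (abs_nonneg _) (hM t) 2
    rw [abs_le]
    constructor <;> nlinarith [sq_nonneg (g t), sq_nonneg M]
  have s1 : ∫ p, W p.2 * P p ∂μ ≤ ∫ p, T p ∂μ := by
    rw [integral_prod_symm _ iW, integral_prod_symm _ iT]
    refine integral_mono_ae iW.integral_prod_right iT.integral_prod_right ?_
    filter_upwards [hP.prod_left_ae, iT.prod_left_ae] with ρ k1 k2
    have te : (fun t => ‖deriv (fun t => ψ (t, ρ)) t‖ ^ 2 +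
        (t + (s + B ^ (-(1:ℝ)/6) * ρ ^ 2 / 2)) ^ 2 * ‖ψ (t, ρ)‖ ^ 2) = fun t => T (t, ρ) := by
      ext t
      simp only [hT, fderiv_slice1 hc, qPot, hs]
      ring
    have hA : Adm (s + B ^ (-(1:ℝ)/6) * ρ ^ 2 / 2) 0 (fun t => ψ (t, ρ)) := by
      refine ⟨hc.comp (by fun_prop), k1, ?_⟩
      rw [te]; exact k2
    have := h1 ρ _ hA
    unfold NN QQ at this
    rw [te] at this
    simp only [integral_const_mul]
    exact this
  have s2 : ∫ p, (-g' p.2 - g p.2 ^ 2) * P p ∂μ ≤ ∫ p, Z p ∂μ := by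
    rw [integral_prod _ iG, integral_prod _ iZ]
    refine integral_mono_ae iG.integral_prod_left iZ.integral_prod_left ?_
    filter_upwards [hP.prod_right_ae, iZ.prod_right_ae] with τ k1 k2
    have te : (fun t => ‖deriv (fun t => ψ (τ, t)) t‖ ^ 2) = fun t => Z (τ, t) := by
      ext t
      simp only [hZ, fderiv_slice2 hc]
    have := line_bound (φ := fun t => ψ (τ, t)) (hc.comp (by fun_prop)) k1 (by rw [te]; exact k2)
      g g' hg hg' M hM hM'
    rw [te] at this
    exact this
  rw [integral_add iT (iZ.const_mul E), integral_const_mul]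
  have s3 : ∫ p, Λ * P p ∂μ ≤ ∫ p, (W p.2 * P p + E * ((-g' p.2 - g p.2 ^ 2) * P p)) ∂μ := by
    refine integral_mono (hP.const_mul Λ) (iW.add (iG.const_mul E)) fun p => ?_
    simp only
    have := mul_le_mul_of_nonneg_right (h2 p.2) (P0 p)
    linarith
  rw [integral_add iW (iG.const_mul E), integral_const_mul, integral_const_mul] at s3
  have := mul_le_mul_of_nonneg_left s2 hE0.le
  linarith

/-- Lemma 2.10: lower bound for large negative `δ̃₁`. -/
theorem statement6
    (ξ₀ : ℝ) (hξ₀ : deGennes ξ₀ = Theta0)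
    (hξ₀uniq : ∀ ξ : ℝ, deGennes ξ = Theta0 → ξ = ξ₀)
    (D₀ : ℝ) (hD₀ : 0 < D₀) :
    ∃ C Dt : ℝ, 0 < C ∧ 0 < Dt ∧
      ∀ D : ℝ, Dt < D → ∀ B : ℝ, D₀ ^ 18 < B → ∀ m : ℤ,
        delta1 B m ξ₀ < -D → |delta1 B m ξ₀| ≤ D₀ * B ^ ((1:ℝ)/6) →
        ∀ ψ : ℝ × ℝ → ℂ, InFormDomain B m ψ →
          (Theta0 + C * D ^ ((1:ℝ)/2) * B ^ (-(1:ℝ)/3)) * (∫ p in halfPlane, ‖ψ p‖ ^ 2)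
            ≤ qForm B m ψ := by
  obtain ⟨c, hc, hnd⟩ := nondeg hξ₀ hD₀
  set c₁ := c / (4 * (1 + D₀ ^ 2)) with hc₁
  have hc₁0 : 0 < c₁ := by positivity
  have hc₁e : c₁ * (4 * (1 + D₀ ^ 2)) = c := div_mul_cancel₀ _ (by positivity)
  set κ := min 1 c₁ with hκ
  have hκ0 : 0 < κ := lt_min one_pos hc₁0
  refine ⟨κ / 10, 4, by positivity, by norm_num, ?_⟩
  intro D hD B hB m hδ hδ' ψ hψ
  have hB0 : 0 < B := lt_trans (by positivity) hB
  set ε := B ^ (-(1:ℝ)/6) with hε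
  have hε0 : 0 < ε := Real.rpow_pos_of_pos hB0 _
  have hε1 : B ^ ((1:ℝ)/6) * ε = 1 := by
    rw [hε, ← Real.rpow_add hB0]; norm_num
  have hε2 : B ^ (-(1:ℝ)/3) = ε ^ 2 := by
    rw [hε, ← Real.rpow_natCast, ← Real.rpow_mul hB0.le]; norm_num
  set s := ((m : ℝ) - B / 2) / Real.sqrt B with hs
  set δ := delta1 B m ξ₀ with hδd
  have hse : s = ξ₀ + δ * ε := by
    have : δ = (s - ξ₀) * B ^ ((1:ℝ)/6) := rfl
    rw [this, mul_assoc, hε1]; ring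
  set σ := Real.sqrt (-δ) with hσ
  have hσ2 : σ ^ 2 = -δ := Real.sq_sqrt (by linarith)
  have hσ0 : 2 ≤ σ := Real.le_sqrt_of_sq_le (by linarith)
  have hσp : 0 < σ := by linarith
  have hDσ : D ^ ((1:ℝ)/2) ≤ σ := by
    rw [← Real.sqrt_eq_rpow]; exact Real.sqrt_le_sqrt (by linarith)
  have hεδ : ε * σ ^ 2 ≤ D₀ := by
    have := mul_le_mul_of_nonneg_left hδ' hε0.le
    rw [abs_of_neg (by linarith)] at this
    rw [hσ2]
    nlinarith
  set W : ℝ → ℝ := fun ρ => Theta0 + c * min 1 ((s + ε * ρ ^ 2 / 2 - ξ₀) ^ 2) with hW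
  have hT0 := Theta0_nonneg
  refine assemble hB0 hψ s _ (Theta0 + c + 9 * (κ * σ) + 9 * (κ * σ ^ 2)) rfl W
    (fun ρ => -κ * σ ^ 2 * GG (ρ / σ)) (fun ρ => -κ * σ * GG' (ρ / σ)) ?_ ?_ ?_ ?_ ?_ ?_ ?_ ?_
  · fun_prop
  · intro t
    have h1 := (GG_deriv (t / σ)).comp t ((hasDerivAt_id t).div_const σ)
    refine HasDerivAt.congr_deriv (h1.const_mul (-κ * σ ^ 2)) ?_
    field_simp
  · have := GG'_cont
    fun_prop
  · intro t
    have m0 : 0 ≤ min 1 ((s + ε * t ^ 2 / 2 - ξ₀) ^ 2) := le_min zero_le_one (sq_nonneg _)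
    have m1 : min 1 ((s + ε * t ^ 2 / 2 - ξ₀) ^ 2) ≤ 1 := min_le_left _ _
    have p1 : 0 < κ * σ := by positivity
    have p2 : 0 < κ * σ ^ 2 := by positivity
    rw [abs_of_nonneg (by positivity)]
    simp only [hW]
    nlinarith
  · intro t
    have p1 : 0 < κ * σ := by positivity
    have p2 : 0 < κ * σ ^ 2 := by positivity
    rw [neg_mul, neg_mul, abs_neg, abs_mul, abs_of_pos p2]
    nlinarith [mul_le_mul_of_nonneg_left (GG_bd (t / σ)) p2.le]
  · intro t
    have p1 : 0 < κ * σ := by positivity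
    have p2 : 0 < κ * σ ^ 2 := by positivity
    rw [neg_mul, neg_mul, abs_neg, abs_mul, abs_of_pos p1]
    nlinarith [mul_le_mul_of_nonneg_left (GG'_bd (t / σ)) p1.le]
  · intro ρ u hu
    refine hnd _ ?_ u hu
    rw [hse]
    have : 0 ≤ ε * ρ ^ 2 / 2 := by positivity
    nlinarith
  · intro ρ
    have wb := well_bound hκ0 (min_le_left _ _) (min_le_right _ _) hσ0 ρ
    rw [hε2]
    set r := ρ / σ with hr
    have hρ : ρ ^ 2 = σ ^ 2 * r ^ 2 := by rw [hr]; field_simp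
    have hR0 := RR_nonneg r
    have mb : (ε * σ ^ 2) ^ 2 * RR r ≤
        (4 * (1 + D₀ ^ 2)) * min 1 ((s + ε * ρ ^ 2 / 2 - ξ₀) ^ 2) := by
      rw [mul_min_of_nonneg _ _ (by positivity)]
      apply le_min
      · have a1 : (ε * σ ^ 2) ^ 2 ≤ D₀ ^ 2 := pow_le_pow_left₀ (by positivity) hεδ 2
        have a2 := RR_le r
        have : (ε * σ ^ 2) ^ 2 * RR r ≤ D₀ ^ 2 * 4 := by gcongr
        linarith
      · have e : s + ε * ρ ^ 2 / 2 - ξ₀ = (ε * σ ^ 2) * (r ^ 2 - 2) / 2 := by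
          rw [hse, hρ, show δ = -σ ^ 2 by linarith]; ring
        rw [e]
        have a1 := mul_le_mul_of_nonneg_left (RR_le' r) (sq_nonneg (ε * σ ^ 2))
        have a2 : 0 ≤ D₀ ^ 2 * ((ε * σ ^ 2) ^ 2 * (r ^ 2 - 2) ^ 2) := by positivity
        linarith
    have mb2 := mul_le_mul_of_nonneg_left mb hc₁0.le
    rw [← mul_assoc c₁ (4 * (1 + D₀ ^ 2)), hc₁e] at mb2
    have wb2 := mul_le_mul_of_nonneg_left wb (sq_nonneg ε)
    have d : κ / 10 * D ^ ((1:ℝ)/2) * ε ^ 2 ≤ κ / 10 * σ * ε ^ 2 := by gcongr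
    simp only [hW]
    linarith
end
end

section
/- For every D > 0 there exist positive constants C₁, C₂, M̃ and B₀ such that for all M > M̃, all B > B₀, all m ∈ ℤ with |δ̃₁| ≤ D, and all ψ in the form domain of q_m: q_m[ψ] ≥ ∫_{ℝ²₊} W_B(ρ)·|ψ(τ,ρ)|² dτ dρ, where W_B(ρ) = Θ₀ + C₁·B^{−1/3} for |ρ| < M and W_B(ρ) = Θ₀ + C₂·M⁴·B^{−1/3} for |ρ| ≥ M. -/
noncomputable section
open MeasureTheory Real Filter Set Topology

lemma aux_ibp (ξ C : ℝ) (f f' : ℝ → ℝ) (hf : ∀ t, HasDerivAt f (f' t) t) (hc : Continuous f')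
    (hb : ∀ t, 0 < t → f t ^ 2 ≤ C * (1 + (t + ξ) ^ 2))
    (hb' : ∀ t, 0 < t → |f' t| ≤ C * (1 + (t + ξ) ^ 2))
    (u : ℝ → ℂ) (hu : ContDiff ℝ 1 u)
    (h1 : IntegrableOn (fun t => ‖u t‖ ^ 2) (Ioi 0))
    (h2 : IntegrableOn (fun t => ‖deriv u t‖ ^ 2 + (t + ξ) ^ 2 * ‖u t‖ ^ 2) (Ioi 0)) :
    IntegrableOn (fun t => f' t * ‖u t‖ ^ 2 + f t * (2 * inner ℝ (u t) (deriv u t))) (Ioi 0) ∧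
    IntegrableOn (fun t => f t ^ 2 * ‖u t‖ ^ 2) (Ioi 0) ∧
    ∫ t in Ioi (0:ℝ), (f' t * ‖u t‖ ^ 2 + f t * (2 * inner ℝ (u t) (deriv u t)))
      = - (f 0 * ‖u 0‖ ^ 2) := by
  have huc : Continuous u := hu.continuous
  have hu'c : Continuous (deriv u) := hu.continuous_deriv le_rfl
  have hfc : Continuous f := continuous_iff_continuousAt.2 fun t => (hf t).continuousAt
  have hinner : ∀ t, |f t * (2 * inner ℝ (u t) (deriv u t))|
      ≤ f t ^ 2 * ‖u t‖ ^ 2 + ‖deriv u t‖ ^ 2 := by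
    intro t
    have := abs_real_inner_le_norm (u t) (deriv u t)
    rw [abs_mul, abs_mul, abs_two]
    have h3 : |f t| ^ 2 = f t ^ 2 := sq_abs _
    have h4 := mul_le_mul_of_nonneg_left this (abs_nonneg (f t))
    nlinarith [sq_nonneg (|f t| * ‖u t‖ - ‖deriv u t‖)]
  have hdom : IntegrableOn (fun t => (2 * |C| + 1) * (‖u t‖ ^ 2 +
      (‖deriv u t‖ ^ 2 + (t + ξ) ^ 2 * ‖u t‖ ^ 2))) (Ioi 0) := (h1.add h2).const_mul _
  have hCle : ∀ t, C * (1 + (t + ξ) ^ 2) ≤ |C| * (1 + (t + ξ) ^ 2) := fun t =>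
    mul_le_mul_of_nonneg_right (le_abs_self C) (by positivity)
  have hfw : IntegrableOn (fun t => f t * ‖u t‖ ^ 2) (Ioi 0) := by
    refine hdom.mono' (by fun_prop) ?_
    refine (ae_restrict_iff' measurableSet_Ioi).2 (ae_of_all _ fun t ht => ?_)
    rw [Real.norm_eq_abs, abs_mul, abs_of_nonneg (sq_nonneg ‖u t‖)]
    have a1 := (hb t ht).trans (hCle t)
    have a2 : |f t| ≤ 1 + f t ^ 2 := by
      nlinarith [sq_abs (f t), sq_nonneg (|f t| - 1)]
    have a3 : |f t| * ‖u t‖ ^ 2 ≤ (1 + |C| * (1 + (t + ξ) ^ 2)) * ‖u t‖ ^ 2 :=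
      mul_le_mul_of_nonneg_right (by linarith) (by positivity)
    have : 0 ≤ |C| * ((t + ξ) ^ 2 * ‖u t‖ ^ 2) := by positivity
    have : 0 ≤ |C| * (‖u t‖ ^ 2) := by positivity
    have : 0 ≤ |C| * (‖deriv u t‖ ^ 2) := by positivity
    have : 0 ≤ (‖deriv u t‖ ^ 2) := by positivity
    have : 0 ≤ ((t + ξ) ^ 2 * ‖u t‖ ^ 2) := by positivity
    linarith
  have hf2w : IntegrableOn (fun t => f t ^ 2 * ‖u t‖ ^ 2) (Ioi 0) := by
    refine hdom.mono' (by fun_prop) ?_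
    refine (ae_restrict_iff' measurableSet_Ioi).2 (ae_of_all _ fun t ht => ?_)
    rw [Real.norm_eq_abs, abs_of_nonneg (by positivity)]
    have a1 := (hb t ht).trans (hCle t)
    have a3 : f t ^ 2 * ‖u t‖ ^ 2 ≤ (|C| * (1 + (t + ξ) ^ 2)) * ‖u t‖ ^ 2 :=
      mul_le_mul_of_nonneg_right (by linarith) (by positivity)
    have : 0 ≤ |C| * ((t + ξ) ^ 2 * ‖u t‖ ^ 2) := by positivity
    have : 0 ≤ |C| * (‖u t‖ ^ 2) := by positivity
    have : 0 ≤ |C| * (‖deriv u t‖ ^ 2) := by positivity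
    have : 0 ≤ (‖u t‖ ^ 2) := by positivity
    have : 0 ≤ (‖deriv u t‖ ^ 2) := by positivity
    have : 0 ≤ ((t + ξ) ^ 2 * ‖u t‖ ^ 2) := by positivity
    linarith
  have hd : IntegrableOn (fun t => f' t * ‖u t‖ ^ 2 + f t * (2 * inner ℝ (u t) (deriv u t)))
      (Ioi 0) := by
    refine hdom.mono' (by fun_prop) ?_
    refine (ae_restrict_iff' measurableSet_Ioi).2 (ae_of_all _ fun t ht => ?_)
    rw [Real.norm_eq_abs]
    refine (abs_add_le _ _).trans ?_
    have a0 := hinner t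
    rw [abs_mul (f' t), abs_of_nonneg (sq_nonneg ‖u t‖)]
    have a1 := (hb t ht).trans (hCle t)
    have a2 := (hb' t ht).trans (hCle t)
    have a3 : f t ^ 2 * ‖u t‖ ^ 2 ≤ (|C| * (1 + (t + ξ) ^ 2)) * ‖u t‖ ^ 2 :=
      mul_le_mul_of_nonneg_right (by linarith) (by positivity)
    have a4 : |f' t| * ‖u t‖ ^ 2 ≤ (|C| * (1 + (t + ξ) ^ 2)) * ‖u t‖ ^ 2 :=
      mul_le_mul_of_nonneg_right (by linarith) (by positivity)
    have : 0 ≤ |C| * (‖deriv u t‖ ^ 2) := by positivity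
    have : 0 ≤ (‖u t‖ ^ 2) := by positivity
    have : 0 ≤ ((t + ξ) ^ 2 * ‖u t‖ ^ 2) := by positivity
    linarith
  refine ⟨hd, hf2w, ?_⟩
  have hder : ∀ t, HasDerivAt (fun t => f t * ‖u t‖ ^ 2)
      (f' t * ‖u t‖ ^ 2 + f t * (2 * inner ℝ (u t) (deriv u t))) t := by
    intro t
    have hut : HasDerivAt u (deriv u t) t := (hu.differentiable one_ne_zero t).hasDerivAt
    exact (hf t).mul hut.norm_sq
  have ht := tendsto_zero_of_hasDerivAt_of_integrableOn_Ioi (a := 0) (fun x _ => hder x) hd hfw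
  have := integral_Ioi_of_hasDerivAt_of_tendsto' (a := 0) (fun x _ => hder x) hd ht
  rw [this]; simp

lemma aux_lower (ξ C μ : ℝ) (f f' : ℝ → ℝ) (hf : ∀ t, HasDerivAt f (f' t) t)
    (hc : Continuous f')
    (hb : ∀ t, 0 < t → f t ^ 2 ≤ C * (1 + (t + ξ) ^ 2))
    (hb' : ∀ t, 0 < t → |f' t| ≤ C * (1 + (t + ξ) ^ 2))
    (h0 : 0 ≤ f 0) (hr : ∀ t, 0 < t → μ ≤ f' t - f t ^ 2 + (t + ξ) ^ 2)
    (u : ℝ → ℂ) (hu : ContDiff ℝ 1 u)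
    (h1 : IntegrableOn (fun t => ‖u t‖ ^ 2) (Ioi 0))
    (h2 : IntegrableOn (fun t => ‖deriv u t‖ ^ 2 + (t + ξ) ^ 2 * ‖u t‖ ^ 2) (Ioi 0)) :
    μ * (∫ t in Ioi (0:ℝ), ‖u t‖ ^ 2) ≤
      ∫ t in Ioi (0:ℝ), (‖deriv u t‖ ^ 2 + (t + ξ) ^ 2 * ‖u t‖ ^ 2) := by
  obtain ⟨hd, -, he⟩ := aux_ibp ξ C f f' hf hc hb hb' u hu h1 h2
  have key : ∫ t in Ioi (0:ℝ), μ * ‖u t‖ ^ 2 ≤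
      ∫ t in Ioi (0:ℝ), ((‖deriv u t‖ ^ 2 + (t + ξ) ^ 2 * ‖u t‖ ^ 2) +
        (f' t * ‖u t‖ ^ 2 + f t * (2 * inner ℝ (u t) (deriv u t)))) := by
    refine setIntegral_mono_on (h1.const_mul μ) (h2.add hd) measurableSet_Ioi fun t ht => ?_
    have a := mul_le_mul_of_nonneg_right (hr t ht) (sq_nonneg ‖u t‖)
    have b : 0 ≤ ‖(f t) • u t + deriv u t‖ ^ 2 := by positivity
    rw [norm_add_sq_real, norm_smul, real_inner_smul_left, mul_pow, Real.norm_eq_abs, sq_abs] at b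
    linarith
  rw [integral_const_mul, integral_add h2 hd, he] at key
  have : 0 ≤ f 0 * ‖u 0‖ ^ 2 := by positivity
  linarith

lemma aux_line (f f' : ℝ → ℝ) (C : ℝ) (hf : ∀ t, HasDerivAt f (f' t) t)
    (hc : Continuous f') (hb : ∀ t, |f t| ≤ C) (hb' : ∀ t, |f' t| ≤ C)
    (u : ℝ → ℂ) (hu : ContDiff ℝ 1 u)
    (h1 : Integrable (fun t => ‖u t‖ ^ 2))
    (h2 : Integrable (fun t => ‖deriv u t‖ ^ 2)) :
    (∫ t, (f' t - f t ^ 2) * ‖u t‖ ^ 2) ≤ ∫ t, ‖deriv u t‖ ^ 2 := by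
  have huc : Continuous u := hu.continuous
  have hu'c : Continuous (deriv u) := hu.continuous_deriv le_rfl
  have hfc : Continuous f := continuous_iff_continuousAt.2 fun t => (hf t).continuousAt
  have i1 : Integrable (fun t => f t * ‖u t‖ ^ 2) :=
    h1.bdd_mul (c := C) (by fun_prop) (ae_of_all _ hb)
  have i2 : Integrable (fun t => f' t * ‖u t‖ ^ 2) :=
    h1.bdd_mul (c := C) (by fun_prop) (ae_of_all _ hb')
  have i3 : Integrable (fun t => f t ^ 2 * ‖u t‖ ^ 2) := by
    refine (i1.bdd_mul (c := C) (by fun_prop) (ae_of_all _ hb)).congr (ae_of_all _ fun t => ?_)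
    simp only; ring
  have i4 : Integrable (fun t => f t * (2 * inner ℝ (u t) (deriv u t))) := by
    refine (i3.add h2).mono' (by fun_prop) (ae_of_all _ fun t => ?_)
    rw [Real.norm_eq_abs]
    have := abs_real_inner_le_norm (u t) (deriv u t)
    rw [abs_mul, abs_mul, abs_two]
    have h3 : |f t| ^ 2 = f t ^ 2 := sq_abs _
    have h4 := mul_le_mul_of_nonneg_left this (abs_nonneg (f t))
    simp only [Pi.add_apply]
    nlinarith [sq_nonneg (|f t| * ‖u t‖ - ‖deriv u t‖)]
  have hder : ∀ t, HasDerivAt (fun t => f t * ‖u t‖ ^ 2)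
      (f' t * ‖u t‖ ^ 2 + f t * (2 * inner ℝ (u t) (deriv u t))) t := by
    intro t
    have hut : HasDerivAt u (deriv u t) t := (hu.differentiable one_ne_zero t).hasDerivAt
    exact (hf t).mul hut.norm_sq
  have h0 := integral_eq_zero_of_hasDerivAt_of_integrable hder (i2.add i4) i1
  have key : (∫ t, (f' t - f t ^ 2) * ‖u t‖ ^ 2) ≤ ∫ t, (‖deriv u t‖ ^ 2 +
      (f' t * ‖u t‖ ^ 2 + f t * (2 * inner ℝ (u t) (deriv u t)))) := by
    refine integral_mono ?_ (h2.add (i2.add i4)) fun t => ?_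
    · refine (i2.sub i3).congr (ae_of_all _ fun t => ?_)
      simp only [Pi.sub_apply]; ring
    · have b : 0 ≤ ‖(f t) • u t + deriv u t‖ ^ 2 := by positivity
      rw [norm_add_sq_real, norm_smul, real_inner_smul_left, mul_pow, Real.norm_eq_abs,
        sq_abs] at b
      simp only
      linarith
  have i5 : Integrable (fun t => f' t * ‖u t‖ ^ 2 + f t * (2 * inner ℝ (u t) (deriv u t))) :=
    i2.add i4
  rw [integral_add h2 i5, h0] at key
  linarith

def Jw (γ y : ℝ) : ℝ := ∫ r in Ioi (0:ℝ), r ^ γ * exp (-r ^ 2 - 2 * r * y)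

lemma Jw_dom (γ A : ℝ) (hγ : -1 < γ) :
    IntegrableOn (fun r : ℝ => r ^ γ * exp (-(1/2) * r ^ 2) * exp (2 * A ^ 2)) (Ioi 0) :=
  (integrableOn_rpow_mul_exp_neg_mul_sq (by norm_num) hγ).mul_const _

lemma Jw_le (γ A r y : ℝ) (hr : 0 < r) (hy : -A ≤ y) :
    r ^ γ * exp (-r ^ 2 - 2 * r * y) ≤ r ^ γ * exp (-(1/2) * r ^ 2) * exp (2 * A ^ 2) := by
  rw [mul_assoc (r ^ γ) (exp _) (exp _), ← Real.exp_add]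
  have : 0 ≤ r ^ γ := by positivity
  gcongr
  nlinarith [sq_nonneg (r - 2 * A), mul_le_mul_of_nonneg_left hy hr.le]

lemma Jw_meas (γ y : ℝ) :
    AEStronglyMeasurable (fun r : ℝ => r ^ γ * exp (-r ^ 2 - 2 * r * y))
      (volume.restrict (Ioi 0)) := by
  refine Measurable.aestronglyMeasurable ?_
  fun_prop

lemma Jw_int (γ y : ℝ) (hγ : -1 < γ) :
    IntegrableOn (fun r : ℝ => r ^ γ * exp (-r ^ 2 - 2 * r * y)) (Ioi 0) := by
  refine (Jw_dom γ (-y) hγ).mono' (Jw_meas γ y) ?_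
  refine (ae_restrict_iff' measurableSet_Ioi).2 (ae_of_all _ fun r (hr : 0 < r) => ?_)
  rw [Real.norm_of_nonneg (by positivity)]
  exact Jw_le γ (-y) r y hr (by simp)

lemma Jw_pos (γ y : ℝ) (hγ : -1 < γ) : 0 < Jw γ y := by
  unfold Jw
  rw [setIntegral_pos_iff_support_of_nonneg_ae]
  · have : Ioi (0:ℝ) ⊆ Function.support (fun r : ℝ => r ^ γ * exp (-r ^ 2 - 2 * r * y)) := by
      intro r (hr : 0 < r)
      have : 0 < r ^ γ * exp (-r ^ 2 - 2 * r * y) := by positivity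
      exact this.ne'
    rw [inter_eq_self_of_subset_right this]
    simp
  · refine (ae_restrict_iff' measurableSet_Ioi).2 (ae_of_all _ fun r (hr : 0 < r) => ?_)
    simp only [Pi.zero_apply]; positivity
  · exact Jw_int γ y hγ

lemma Jw_deriv (γ y : ℝ) (hγ : -1 < γ) : HasDerivAt (Jw γ) (-2 * Jw (γ + 1) y) y := by
  have h := hasDerivAt_integral_of_dominated_loc_of_deriv_le (μ := volume.restrict (Ioi (0:ℝ)))
    (F := fun y r => r ^ γ * exp (-r ^ 2 - 2 * r * y))
    (F' := fun y r => -2 * (r ^ (γ + 1) * exp (-r ^ 2 - 2 * r * y)))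
    (x₀ := y) (s := Metric.ball y 1)
    (bound := fun r => 2 * (r ^ (γ + 1) * exp (-(1/2) * r ^ 2) * exp (2 * (|y| + 1) ^ 2)))
    (Metric.ball_mem_nhds y one_pos) (Eventually.of_forall fun z => Jw_meas γ z)
    (Jw_int γ y hγ) ((Jw_meas (γ + 1) y).const_mul _) ?_
    ((Jw_dom (γ + 1) (|y| + 1) (by linarith)).const_mul 2) ?_
  · have := h.2
    rw [integral_const_mul] at this
    exact this
  · refine (ae_restrict_iff' measurableSet_Ioi).2 (ae_of_all _ fun r (hr : 0 < r) z hz => ?_)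
    rw [norm_mul, Real.norm_of_nonneg (r := r ^ (γ + 1) * exp (-r ^ 2 - 2 * r * z)) (by positivity)]
    have hz' : |z - y| < 1 := by simpa [Real.dist_eq] using hz
    have : -(|y| + 1) ≤ z := by
      have := (abs_lt.1 hz').1
      have := neg_abs_le y
      linarith
    have := Jw_le (γ + 1) (|y| + 1) r z hr this
    norm_num
    norm_num at this
    exact this
  · refine (ae_restrict_iff' measurableSet_Ioi).2 (ae_of_all _ fun r (hr : 0 < r) z hz => ?_)
    have h1 : HasDerivAt (fun z : ℝ => -r ^ 2 - 2 * r * z) (-(2 * r)) z := by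
      simpa using ((hasDerivAt_id z).const_mul (2 * r)).const_sub (-r ^ 2)
    have := (h1.exp.const_mul (r ^ γ))
    refine this.congr_deriv ?_
    rw [Real.rpow_add hr, Real.rpow_one]; ring

lemma Jw_rec (γ y : ℝ) (hγ : -1 < γ) :
    (γ + 1) * Jw γ y - 2 * Jw (γ + 2) y - 2 * y * Jw (γ + 1) y = 0 := by
  have i0 := Jw_int γ y hγ
  have i1 := Jw_int (γ + 1) y (by linarith)
  have i2 := Jw_int (γ + 2) y (by linarith)
  have hd : ∀ r ∈ Ioi (0:ℝ), HasDerivAt (fun r : ℝ => r ^ (γ + 1) * exp (-r ^ 2 - 2 * r * y))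
      ((γ + 1) * (r ^ γ * exp (-r ^ 2 - 2 * r * y))
        - 2 * (r ^ (γ + 2) * exp (-r ^ 2 - 2 * r * y))
        - 2 * y * (r ^ (γ + 1) * exp (-r ^ 2 - 2 * r * y))) r := by
    intro r (hr : 0 < r)
    have h1 : HasDerivAt (fun r : ℝ => -r ^ 2 - 2 * r * y) (-(2 * r) - 2 * y) r := by
      have a := ((hasDerivAt_id r).pow 2).neg
      have b := ((hasDerivAt_id r).const_mul 2).mul_const y
      refine (a.sub b).congr_deriv ?_
      simp
    have h2 : HasDerivAt (fun r : ℝ => r ^ (γ + 1)) ((γ + 1) * r ^ (γ + 1 - 1)) r :=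
      Real.hasDerivAt_rpow_const (Or.inl hr.ne')
    refine (h2.mul h1.exp).congr_deriv ?_
    rw [add_sub_cancel_right, Real.rpow_add hr, Real.rpow_add hr, Real.rpow_one, Real.rpow_two]
    ring
  have hi : IntegrableOn (fun r : ℝ => (γ + 1) * (r ^ γ * exp (-r ^ 2 - 2 * r * y))
        - 2 * (r ^ (γ + 2) * exp (-r ^ 2 - 2 * r * y))
        - 2 * y * (r ^ (γ + 1) * exp (-r ^ 2 - 2 * r * y))) (Ioi 0) :=
    ((i0.const_mul _).sub (i2.const_mul _)).sub (i1.const_mul _)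
  have ht := tendsto_zero_of_hasDerivAt_of_integrableOn_Ioi hd hi i1
  have hcont : ContinuousWithinAt (fun r : ℝ => r ^ (γ + 1) * exp (-r ^ 2 - 2 * r * y))
      (Ici 0) 0 := by
    refine ContinuousAt.continuousWithinAt ?_
    refine ContinuousAt.mul (Real.continuousAt_rpow_const _ _ (Or.inr (by linarith))) ?_
    fun_prop
  have h := integral_Ioi_of_hasDerivAt_of_tendsto hcont hd hi ht
  have i3 : IntegrableOn (fun r : ℝ => (γ + 1) * (r ^ γ * exp (-r ^ 2 - 2 * r * y))
        - 2 * (r ^ (γ + 2) * exp (-r ^ 2 - 2 * r * y))) (Ioi 0) :=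
    (i0.const_mul _).sub (i2.const_mul _)
  rw [integral_sub i3 (i1.const_mul _),
    integral_sub (i0.const_mul _) (i2.const_mul _), integral_const_mul, integral_const_mul,
    integral_const_mul, Real.zero_rpow (by linarith)] at h
  unfold Jw
  simpa using h

lemma Jw_cs (γ y : ℝ) (hγ : -1 < γ) : Jw (γ + 1) y ^ 2 ≤ Jw γ y * Jw (γ + 2) y := by
  have i0 := Jw_int γ y hγ
  have i1 := Jw_int (γ + 1) y (by linarith)
  have i2 := Jw_int (γ + 2) y (by linarith)
  have h0 := Jw_pos γ y hγ
  set c := Jw (γ + 1) y / Jw γ y with hc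
  have h : 0 ≤ ∫ r in Ioi (0:ℝ), (r ^ (γ + 2) * exp (-r ^ 2 - 2 * r * y)
      - (2 * c) * (r ^ (γ + 1) * exp (-r ^ 2 - 2 * r * y))
      + c ^ 2 * (r ^ γ * exp (-r ^ 2 - 2 * r * y))) := by
    refine setIntegral_nonneg measurableSet_Ioi fun r (hr : 0 < r) => ?_
    have : r ^ (γ + 2) * exp (-r ^ 2 - 2 * r * y)
      - (2 * c) * (r ^ (γ + 1) * exp (-r ^ 2 - 2 * r * y))
      + c ^ 2 * (r ^ γ * exp (-r ^ 2 - 2 * r * y)) =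
      (r - c) ^ 2 * (r ^ γ * exp (-r ^ 2 - 2 * r * y)) := by
      rw [Real.rpow_add hr, Real.rpow_add hr, Real.rpow_one, Real.rpow_two]
      ring
    rw [this]; positivity
  have i3 : IntegrableOn (fun r : ℝ => r ^ (γ + 2) * exp (-r ^ 2 - 2 * r * y)
      - (2 * c) * (r ^ (γ + 1) * exp (-r ^ 2 - 2 * r * y))) (Ioi 0) :=
    i2.sub (i1.const_mul _)
  rw [integral_add i3 (i0.const_mul _),
    integral_sub i2 (i1.const_mul _), integral_const_mul, integral_const_mul] at h
  change 0 ≤ Jw (γ + 2) y - (2 * c) * Jw (γ + 1) y + c ^ 2 * Jw γ y at h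
  have hc' : c * Jw γ y = Jw (γ + 1) y := by rw [hc]; field_simp
  have := mul_nonneg h h0.le
  rw [← hc'] at this ⊢
  nlinarith

lemma weber (l : ℝ) (hl : l < 1) : ∃ F φ : ℝ → ℝ,
    (∀ y, HasDerivAt F (F y ^ 2 + l - y ^ 2) y) ∧ (∀ y, HasDerivAt φ (-F y * φ y) y) ∧
    (∀ y, 0 < φ y) ∧ (∀ y, y ≤ F y) ∧ (∀ y, F y ^ 2 ≤ y ^ 2 + (1 - l)) := by
  obtain ⟨γ, hγd⟩ : ∃ γ : ℝ, γ = -(1 + l) / 2 := ⟨_, rfl⟩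
  have hγ : -1 < γ := by rw [hγd]; linarith
  have hlγ : l = -1 - 2 * γ := by rw [hγd]; ring
  refine ⟨fun y => y + 2 * (Jw (γ + 1) y / Jw γ y), fun y => exp (-(y ^ 2) / 2) * Jw γ y,
    fun y => ?_, fun y => ?_, fun y => ?_, fun y => ?_, fun y => ?_⟩
  · have h0 := Jw_pos γ y hγ
    have d0 := Jw_deriv γ y hγ
    have d1 := Jw_deriv (γ + 1) y (by linarith)
    have r := Jw_rec γ y hγ
    have d := (hasDerivAt_id y).add ((d1.div d0 h0.ne').const_mul 2)
    rw [show γ + 1 + 1 = γ + 2 by ring] at d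
    refine d.congr_deriv ?_
    rw [hlγ]
    field_simp
    linear_combination (2 * Jw γ y) * r
  · have h0 := Jw_pos γ y hγ
    have d0 := Jw_deriv γ y hγ
    have e : HasDerivAt (fun y : ℝ => -(y ^ 2) / 2) (-y) y := by
      have := (((hasDerivAt_id y).pow 2).neg).div_const 2
      refine this.congr_deriv ?_
      simp; ring
    refine (e.exp.mul d0).congr_deriv ?_
    field_simp
    ring
  · have h0 := Jw_pos γ y hγ
    positivity
  · have h0 := Jw_pos γ y hγ
    have h1 := Jw_pos (γ + 1) y (by linarith)
    have : 0 < Jw (γ + 1) y / Jw γ y := by positivity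
    simp only; linarith
  · have h0 := Jw_pos γ y hγ
    have r := Jw_rec γ y hγ
    have cs := Jw_cs γ y hγ
    have key : (Jw (γ + 1) y / Jw γ y) ^ 2 ≤ Jw (γ + 2) y / Jw γ y := by
      rw [div_pow, div_le_div_iff₀ (by positivity) h0]
      nlinarith
    have r' : (γ + 1) - 2 * (Jw (γ + 2) y / Jw γ y) - 2 * y * (Jw (γ + 1) y / Jw γ y) = 0 := by
      field_simp
      linarith
    rw [hlγ]
    simp only
    nlinarith

lemma test_energy (l : ℝ) (F φ : ℝ → ℝ)
    (hF : ∀ y, HasDerivAt F (F y ^ 2 + l - y ^ 2) y) (hφ : ∀ y, HasDerivAt φ (-F y * φ y) y)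
    (hpos : ∀ y, 0 < φ y) (hge : ∀ y, y ≤ F y) (hsq : ∀ y, F y ^ 2 ≤ y ^ 2 + (1 - l)) (ξ : ℝ) :
    ∃ u : ℝ → ℂ, ContDiff ℝ 1 u ∧
    IntegrableOn (fun t => ‖u t‖ ^ 2) (Ioi 0) ∧
    IntegrableOn (fun t => ‖deriv u t‖ ^ 2 + (t + ξ) ^ 2 * ‖u t‖ ^ 2) (Ioi 0) ∧
    0 < (∫ t in Ioi (0:ℝ), ‖u t‖ ^ 2) ∧
    (∫ t in Ioi (0:ℝ), (‖deriv u t‖ ^ 2 + (t + ξ) ^ 2 * ‖u t‖ ^ 2)) =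
      l * (∫ t in Ioi (0:ℝ), ‖u t‖ ^ 2) + F ξ * φ ξ ^ 2 := by
  have hFc : Continuous F := continuous_iff_continuousAt.2 fun t => (hF t).continuousAt
  have hφc : Continuous φ := continuous_iff_continuousAt.2 fun t => (hφ t).continuousAt
  have hsh : ∀ t : ℝ, HasDerivAt (fun t : ℝ => t + ξ) 1 t := fun t =>
    (hasDerivAt_id t).add_const ξ
  have hg : ∀ t, HasDerivAt (fun t => φ (t + ξ)) (-F (t + ξ) * φ (t + ξ)) t := fun t => by
    simpa [Function.comp_def] using (hφ (t + ξ)).comp t (hsh t)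
  have hu : ∀ t, HasDerivAt (fun t => ((φ (t + ξ) : ℝ) : ℂ))
      ((-F (t + ξ) * φ (t + ξ) : ℝ) : ℂ) t := fun t => (hg t).ofReal_comp
  set u : ℝ → ℂ := fun t => ((φ (t + ξ) : ℝ) : ℂ) with hud
  have hder : deriv u = fun t => ((-F (t + ξ) * φ (t + ξ) : ℝ) : ℂ) :=
    funext fun t => (hu t).deriv
  have hnu : ∀ t, ‖u t‖ ^ 2 = φ (t + ξ) ^ 2 := fun t => by
    simp [hud, Complex.norm_real]
  have hndu : ∀ t, ‖deriv u t‖ ^ 2 = F (t + ξ) ^ 2 * φ (t + ξ) ^ 2 := fun t => by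
    rw [hder]; simp [mul_pow]
  have huC : ContDiff ℝ 1 u := by
    rw [contDiff_one_iff_deriv]
    refine ⟨fun t => (hu t).differentiableAt, ?_⟩
    rw [hder]; fun_prop
  -- Gaussian decay
  have hanti : Antitone (fun y => φ y * exp (y ^ 2 / 2)) := by
    have hd : ∀ y, HasDerivAt (fun y => φ y * exp (y ^ 2 / 2))
        ((y - F y) * (φ y * exp (y ^ 2 / 2))) y := by
      intro y
      have e : HasDerivAt (fun y : ℝ => y ^ 2 / 2) y y := by
        have := ((hasDerivAt_id y).pow 2).div_const 2
        refine this.congr_deriv ?_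
        simp
      refine ((hφ y).mul e.exp).congr_deriv ?_
      ring
    refine antitone_of_deriv_nonpos (fun y => (hd y).differentiableAt) fun y => ?_
    rw [(hd y).deriv]
    have := hpos y
    exact mul_nonpos_of_nonpos_of_nonneg (by linarith [hge y]) (by positivity)
  set K := φ ξ * exp (ξ ^ 2 / 2) with hK
  have hKb : ∀ t, 0 < t → φ (t + ξ) ^ 2 ≤ K ^ 2 * exp (-1 * (t + ξ) ^ 2) := by
    intro t ht
    have h1 : φ (t + ξ) * exp ((t + ξ) ^ 2 / 2) ≤ K := hanti (by linarith : ξ ≤ t + ξ)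
    have h2 : φ (t + ξ) ≤ K * exp (-((t + ξ) ^ 2 / 2)) := by
      rw [Real.exp_neg, ← div_eq_mul_inv, le_div_iff₀ (Real.exp_pos _)]
      exact h1
    have h3 : exp (-1 * (t + ξ) ^ 2) = exp (-((t + ξ) ^ 2 / 2)) ^ 2 := by
      rw [← Real.exp_nat_mul]; congr 1; push_cast; ring
    rw [h3, ← mul_pow]
    exact pow_le_pow_left₀ (hpos _).le h2 2
  have g0 : IntegrableOn (fun t : ℝ => exp (-1 * (t + ξ) ^ 2)) (Ioi 0) :=
    ((integrable_exp_neg_mul_sq one_pos).comp_add_right ξ).integrableOn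
  have g2 : IntegrableOn (fun t : ℝ => (t + ξ) ^ 2 * exp (-1 * (t + ξ) ^ 2)) (Ioi 0) := by
    have := integrable_rpow_mul_exp_neg_mul_sq one_pos (by norm_num : (-1:ℝ) < 2)
    simp only [Real.rpow_two] at this
    exact (this.comp_add_right ξ).integrableOn
  have hucont := huC.continuous
  have hu'cont : Continuous (deriv u) := huC.continuous_deriv le_rfl
  have I1 : IntegrableOn (fun t => ‖u t‖ ^ 2) (Ioi 0) := by
    refine (g0.const_mul (K ^ 2)).mono' (by fun_prop) ?_
    refine (ae_restrict_iff' measurableSet_Ioi).2 (ae_of_all _ fun t ht => ?_)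
    rw [Real.norm_of_nonneg (by positivity), hnu]
    exact hKb t ht
  have I2 : IntegrableOn (fun t => ‖deriv u t‖ ^ 2 + (t + ξ) ^ 2 * ‖u t‖ ^ 2) (Ioi 0) := by
    refine ((g2.const_mul (2 * K ^ 2)).add (g0.const_mul (|1 - l| * K ^ 2))).mono'
      (by fun_prop) ?_
    refine (ae_restrict_iff' measurableSet_Ioi).2 (ae_of_all _ fun t ht => ?_)
    rw [Real.norm_of_nonneg (by positivity), hnu, hndu]
    simp only [Pi.add_apply]
    have a1 := hKb t ht
    have a2 : F (t + ξ) ^ 2 + (t + ξ) ^ 2 ≤ 2 * (t + ξ) ^ 2 + |1 - l| := by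
      have := hsq (t + ξ)
      have := le_abs_self (1 - l)
      linarith
    calc F (t + ξ) ^ 2 * φ (t + ξ) ^ 2 + (t + ξ) ^ 2 * φ (t + ξ) ^ 2
        = (F (t + ξ) ^ 2 + (t + ξ) ^ 2) * φ (t + ξ) ^ 2 := by ring
      _ ≤ (2 * (t + ξ) ^ 2 + |1 - l|) * (K ^ 2 * exp (-1 * (t + ξ) ^ 2)) := by gcongr
      _ = _ := by ring
  refine ⟨u, huC, I1, I2, ?_, ?_⟩
  · rw [setIntegral_pos_iff_support_of_nonneg_ae (ae_of_all _ fun t => by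
      simp only [Pi.zero_apply]; positivity) I1]
    have : Function.support (fun t => ‖u t‖ ^ 2) = univ := by
      ext t
      have := hpos (t + ξ)
      simp [hnu, this.ne']
    rw [this]; simp
  · have hf : ∀ t, HasDerivAt (fun t => F (t + ξ)) (F (t + ξ) ^ 2 + l - (t + ξ) ^ 2) t :=
      fun t => by simpa [Function.comp_def] using (hF (t + ξ)).comp t (hsh t)
    have hcc : Continuous (fun t => F (t + ξ) ^ 2 + l - (t + ξ) ^ 2) := by fun_prop
    obtain ⟨-, -, he⟩ := aux_ibp ξ (2 + |1 - l| + |l|) (fun t => F (t + ξ))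
      (fun t => F (t + ξ) ^ 2 + l - (t + ξ) ^ 2) hf hcc
      (fun t _ => by
        have := hsq (t + ξ)
        have := le_abs_self (1 - l)
        nlinarith [abs_nonneg l, abs_nonneg (1 - l), sq_nonneg (t + ξ),
          mul_nonneg (add_nonneg (abs_nonneg l) (abs_nonneg (1 - l))) (sq_nonneg (t + ξ))])
      (fun t _ => by
        have := hsq (t + ξ)
        have := le_abs_self (1 - l)
        have := le_abs_self l
        have := neg_abs_le l
        have := mul_nonneg (add_nonneg (abs_nonneg l) (abs_nonneg (1 - l))) (sq_nonneg (t + ξ))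
        rw [abs_le]
        constructor <;> nlinarith [abs_nonneg l, abs_nonneg (1 - l), sq_nonneg (t + ξ),
          sq_nonneg (F (t + ξ))])
      u huC I1 I2
    have e2 : ∀ t, (F (t + ξ) ^ 2 + l - (t + ξ) ^ 2) * ‖u t‖ ^ 2
        + F (t + ξ) * (2 * inner ℝ (u t) (deriv u t))
        = l * ‖u t‖ ^ 2 - (‖deriv u t‖ ^ 2 + (t + ξ) ^ 2 * ‖u t‖ ^ 2) := by
      intro t
      have : inner ℝ (u t) (deriv u t) = -F (t + ξ) * φ (t + ξ) ^ 2 := by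
        rw [hder, hud]
        simp [Complex.inner]
        ring
      rw [this, hnu, hndu]; ring
    simp only [e2] at he
    rw [integral_sub (I1.const_mul l) I2, integral_const_mul] at he
    rw [hnu 0, zero_add] at he
    linarith

lemma Theta0_le (ξ : ℝ) : Theta0 ≤ deGennes ξ :=
  ciInf_le ⟨0, by rintro _ ⟨x, rfl⟩; exact deGennes_nonneg x⟩ ξ

lemma deGennes_le (ξ : ℝ) (u : ℝ → ℂ) (hu : ContDiff ℝ 1 u)
    (h1 : IntegrableOn (fun t => ‖u t‖ ^ 2) (Ioi 0))
    (h2 : IntegrableOn (fun t => ‖deriv u t‖ ^ 2 + (t + ξ) ^ 2 * ‖u t‖ ^ 2) (Ioi 0)) :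
    deGennes ξ * (∫ t in Ioi (0:ℝ), ‖u t‖ ^ 2) ≤
      ∫ t in Ioi (0:ℝ), (‖deriv u t‖ ^ 2 + (t + ξ) ^ 2 * ‖u t‖ ^ 2) := by
  have hn : 0 ≤ ∫ t in Ioi (0:ℝ), ‖u t‖ ^ 2 := integral_nonneg fun t => by positivity
  rcases hn.eq_or_lt with h | h
  · rw [← h, mul_zero]
    refine integral_nonneg fun t => ?_
    simp only [Pi.zero_apply]; positivity
  · rw [← le_div_iff₀ h]
    refine csInf_le ⟨0, ?_⟩ ⟨u, hu, h1, h2, h, rfl⟩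
    rintro q ⟨u, -, -, -, h, rfl⟩
    refine div_nonneg (integral_nonneg fun t => ?_) h.le
    simp only [Pi.zero_apply]; positivity

lemma gauss_test (ξ : ℝ) : ∃ u : ℝ → ℂ, ContDiff ℝ 1 u ∧
    IntegrableOn (fun t => ‖u t‖ ^ 2) (Ioi 0) ∧
    IntegrableOn (fun t => ‖deriv u t‖ ^ 2 + (t + ξ) ^ 2 * ‖u t‖ ^ 2) (Ioi 0) ∧
    0 < (∫ t in Ioi (0:ℝ), ‖u t‖ ^ 2) ∧
    (∫ t in Ioi (0:ℝ), (‖deriv u t‖ ^ 2 + (t + ξ) ^ 2 * ‖u t‖ ^ 2)) =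
      1 * (∫ t in Ioi (0:ℝ), ‖u t‖ ^ 2) + ξ * exp (-(ξ ^ 2) / 2) ^ 2 := by
  refine test_energy 1 (fun y => y) (fun y => exp (-(y ^ 2) / 2)) (fun y => ?_) (fun y => ?_)
    (fun y => by positivity) (fun y => le_rfl) (fun y => by simp) ξ
  · refine (hasDerivAt_id y).congr_deriv ?_
    ring
  · have e : HasDerivAt (fun y : ℝ => -(y ^ 2) / 2) (-y) y := by
      have := (((hasDerivAt_id y).pow 2).neg).div_const 2
      refine this.congr_deriv ?_
      simp; ring
    refine e.exp.congr_deriv ?_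
    ring

lemma le_deGennes (ξ μ : ℝ) (h : ∀ u : ℝ → ℂ, ContDiff ℝ 1 u →
    IntegrableOn (fun t => ‖u t‖ ^ 2) (Ioi 0) →
    IntegrableOn (fun t => ‖deriv u t‖ ^ 2 + (t + ξ) ^ 2 * ‖u t‖ ^ 2) (Ioi 0) →
    μ * (∫ t in Ioi (0:ℝ), ‖u t‖ ^ 2) ≤
      ∫ t in Ioi (0:ℝ), (‖deriv u t‖ ^ 2 + (t + ξ) ^ 2 * ‖u t‖ ^ 2)) : μ ≤ deGennes ξ := by
  refine le_csInf ?_ ?_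
  · obtain ⟨u, hu, h1, h2, h3, h4⟩ := gauss_test ξ
    exact ⟨_, u, hu, h1, h2, h3, rfl⟩
  · rintro q ⟨u, hu, h1, h2, h3, rfl⟩
    rw [le_div_iff₀ h3]
    exact h u hu h1 h2

lemma one_le_deGennes (ξ : ℝ) (hξ : 0 ≤ ξ) : 1 ≤ deGennes ξ := by
  refine le_deGennes ξ 1 fun u hu h1 h2 => ?_
  refine aux_lower ξ 1 1 (fun t => t + ξ) (fun _ => 1)
    (fun t => (hasDerivAt_id t).add_const ξ) continuous_const (fun t _ => ?_) (fun t _ => ?_)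
    (by simpa using hξ) (fun t _ => by simp) u hu h1 h2
  · simp
  · simp; positivity

lemma super (F : ℝ → ℝ) (l : ℝ) (hl0 : 0 ≤ l) (hl1 : l < 1)
    (hF : ∀ y, HasDerivAt F (F y ^ 2 + l - y ^ 2) y) (hge : ∀ y, y ≤ F y)
    (hsq : ∀ y, F y ^ 2 ≤ y ^ 2 + (1 - l)) (hnn : ∀ y, 0 ≤ F y)
    (L c ε ξ : ℝ) (hc : c = 1 / (2 * (2 + L ^ 2))) (hε : 0 ≤ ε) (hεc : ε ≤ c / 16)
    (hξL : -L ≤ ξ) (hL : 0 ≤ L) (hFξ : 4 * ε ≤ F ξ) (u : ℝ → ℂ) (hu : ContDiff ℝ 1 u)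
    (h1 : IntegrableOn (fun t => ‖u t‖ ^ 2) (Ioi 0))
    (h2 : IntegrableOn (fun t => ‖deriv u t‖ ^ 2 + (t + ξ) ^ 2 * ‖u t‖ ^ 2) (Ioi 0)) :
    (l + c * ε) * (∫ t in Ioi (0:ℝ), ‖u t‖ ^ 2) ≤
      ∫ t in Ioi (0:ℝ), (‖deriv u t‖ ^ 2 + (t + ξ) ^ 2 * ‖u t‖ ^ 2) := by
  have hc0 : 0 < c := by rw [hc]; positivity
  have hc4 : c ≤ 1 / 4 := by
    rw [hc, div_le_div_iff₀ (by positivity) (by norm_num)]; nlinarith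
  have hFc : Continuous F := continuous_iff_continuousAt.2 fun t => (hF t).continuousAt
  have hsh : ∀ t : ℝ, HasDerivAt (fun t : ℝ => t + ξ) 1 t := fun t =>
    (hasDerivAt_id t).add_const ξ
  have hlo : ∀ y, (2:ℝ) / 5 ≤ 2 - arctan y := fun y => by
    have := Real.arctan_lt_pi_div_two y
    have := Real.pi_lt_d2
    linarith
  have hhi : ∀ y, 2 - arctan y ≤ 4 := fun y => by
    have := Real.neg_pi_div_two_lt_arctan y
    have := Real.pi_lt_d2
    linarith
  have hmain : ∀ y, -L ≤ y → c ≤ 1 / (1 + y ^ 2) + 2 * F y * (2 - arctan y)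
      - ε * (2 - arctan y) ^ 2 := by
    intro y hy
    have a1 : ε * (2 - arctan y) ^ 2 ≤ c := by
      have : (2 - arctan y) ^ 2 ≤ 16 := by nlinarith [hlo y, hhi y]
      nlinarith
    have a2 : 0 ≤ 2 * F y * (2 - arctan y) :=
      mul_nonneg (by linarith [hnn y]) (by linarith [hlo y])
    rcases le_total y 1 with h | h
    · have : 2 * c ≤ 1 / (1 + y ^ 2) := by
        rw [hc, le_div_iff₀ (by positivity)]
        have : y ^ 2 ≤ 1 + L ^ 2 := by
          rcases le_total y 0 with h' | h' <;> nlinarith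
        field_simp
        linarith
      linarith
    · have b1 : 0 ≤ 1 / (1 + y ^ 2) := by positivity
      have : (4:ℝ) / 5 ≤ 2 * F y * (2 - arctan y) := by nlinarith [hge y, hlo y]
      linarith
  refine aux_lower ξ 20 (l + c * ε) (fun t => F (t + ξ) - ε * (2 - arctan (t + ξ)))
    (fun t => F (t + ξ) ^ 2 + l - (t + ξ) ^ 2 + ε * (1 / (1 + (t + ξ) ^ 2)))
    (fun t => ?_) ?_ (fun t ht => ?_) (fun t ht => ?_) ?_ (fun t ht => ?_) u hu h1 h2
  · have e1 : HasDerivAt (fun t => F (t + ξ)) (F (t + ξ) ^ 2 + l - (t + ξ) ^ 2) t := by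
      simpa [Function.comp_def] using (hF (t + ξ)).comp t (hsh t)
    have e2 := (((hsh t).arctan).const_sub 2).const_mul ε
    refine (e1.sub e2).congr_deriv ?_
    ring
  · refine Continuous.add (by fun_prop) (continuous_const.mul ?_)
    exact continuous_const.div (by fun_prop) fun t => by positivity
  · have := hsq (t + ξ)
    have a1 := hlo (t + ξ)
    have a2 := hhi (t + ξ)
    have a3 : ε * (2 - arctan (t + ξ)) ≤ 1 := by nlinarith
    have a4 : 0 ≤ ε * (2 - arctan (t + ξ)) := by nlinarith
    nlinarith [sq_nonneg (F (t + ξ) + ε * (2 - arctan (t + ξ))), sq_nonneg (t + ξ)]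
  · have := hsq (t + ξ)
    have b1 : 0 ≤ 1 / (1 + (t + ξ) ^ 2) := by positivity
    have b2 : 1 / (1 + (t + ξ) ^ 2) ≤ 1 := by
      rw [div_le_one (by positivity)]; nlinarith [sq_nonneg (t + ξ)]
    rw [abs_le]
    constructor <;> nlinarith [sq_nonneg (t + ξ), sq_nonneg (F (t + ξ))]
  · simp only [zero_add]
    nlinarith [hhi ξ]
  · have := mul_le_mul_of_nonneg_left (hmain (t + ξ) (by linarith)) hε
    nlinarith

/-- Quadratic lower bound of the de Gennes energy to the right of the minimum. -/
lemma main1d (ξ₀ : ℝ) (hξ₀ : deGennes ξ₀ = Theta0) : ∃ c : ℝ, 0 < c ∧ c ≤ 1 ∧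
    ∀ ξ : ℝ, ∀ u : ℝ → ℂ, ContDiff ℝ 1 u →
    IntegrableOn (fun t => ‖u t‖ ^ 2) (Ioi 0) →
    IntegrableOn (fun t => ‖deriv u t‖ ^ 2 + (t + ξ) ^ 2 * ‖u t‖ ^ 2) (Ioi 0) →
    (Theta0 + c * (max (ξ - ξ₀) 0) ^ 2) * (∫ t in Ioi (0:ℝ), ‖u t‖ ^ 2) ≤
      ∫ t in Ioi (0:ℝ), (‖deriv u t‖ ^ 2 + (t + ξ) ^ 2 * ‖u t‖ ^ 2) := by
  obtain ⟨F, φ, hF, hφ, hpos, hge, hsq⟩ := weber Theta0 Theta0_lt_one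
  have hnn : ∀ y, 0 ≤ F y := by
    intro ξ
    obtain ⟨u, hu, h1, h2, h3, h4⟩ := test_energy Theta0 F φ hF hφ hpos hge hsq ξ
    have h := deGennes_le ξ u hu h1 h2
    rw [h4] at h
    have h5 := mul_le_mul_of_nonneg_right (Theta0_le ξ) h3.le
    have h6 : 0 < φ ξ ^ 2 := by have := hpos ξ; positivity
    by_contra hneg
    nlinarith [mul_neg_of_neg_of_pos (not_le.1 hneg) h6]
  have hneg : ξ₀ < 0 := by
    by_contra h
    have := one_le_deGennes ξ₀ (not_lt.1 h)
    have := Theta0_lt_one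
    linarith
  have hF0 : F ξ₀ = 0 := by
    by_contra h
    have hp : 0 < F ξ₀ := lt_of_le_of_ne (hnn ξ₀) (Ne.symm h)
    obtain ⟨c, hc⟩ : ∃ c : ℝ, c = 1 / (2 * (2 + (-ξ₀) ^ 2)) := ⟨_, rfl⟩
    have hc0 : 0 < c := by rw [hc]; positivity
    have hε : 0 < min (c / 16) (F ξ₀ / 4) := lt_min (by positivity) (by positivity)
    have := le_deGennes ξ₀ (Theta0 + c * min (c / 16) (F ξ₀ / 4)) (fun u hu h1 h2 =>
      super F Theta0 Theta0_nonneg Theta0_lt_one hF hge hsq hnn (-ξ₀) c _ ξ₀ hc hε.le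
        (min_le_left _ _) (by simp) (by linarith)
        (by linarith [min_le_right (c / 16) (F ξ₀ / 4)]) u hu h1 h2)
    have := mul_pos hc0 hε
    linarith
  have hT : Theta0 = ξ₀ ^ 2 := by
    have hm : IsLocalMin F ξ₀ := Eventually.of_forall fun y => by rw [hF0]; exact hnn y
    have := hm.hasDerivAt_eq_zero (hF ξ₀)
    rw [hF0] at this
    linarith
  obtain ⟨a, ha⟩ : ∃ a : ℝ, a = -ξ₀ := ⟨_, rfl⟩
  have ha0 : 0 < a := by linarith
  have hTa : Theta0 = a ^ 2 := by rw [hT, ha]; ring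
  have ha1 : a < 1 := by have := Theta0_lt_one; nlinarith
  have hlow : ∀ s, 0 ≤ s → a * s ^ 2 - s ^ 3 / 3 ≤ F (s - a) := by
    have hd : ∀ s, HasDerivAt (fun s => F (s - a) - (a * s ^ 2 - s ^ 3 / 3)) (F (s - a) ^ 2) s := by
      intro s
      have hsh : HasDerivAt (fun t : ℝ => t - a) 1 s := (hasDerivAt_id s).sub_const a
      have e1 := (hF (s - a)).comp s hsh
      have e2 := ((hasDerivAt_id s).pow 2).const_mul a
      have e3 := ((hasDerivAt_id s).pow 3).div_const 3
      refine (e1.sub (e2.sub e3)).congr_deriv ?_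
      simp only [id]
      rw [hTa]; push_cast; ring
    have hmono : Monotone (fun s => F (s - a) - (a * s ^ 2 - s ^ 3 / 3)) :=
      monotone_of_deriv_nonneg (fun s => (hd s).differentiableAt) fun s => by
        rw [(hd s).deriv]; positivity
    intro s hs
    have := hmono hs
    simp only [zero_sub] at this
    rw [ha, neg_neg, hF0] at this
    rw [ha]
    norm_num at this
    rw [sub_neg_eq_add]
    linarith
  obtain ⟨k, hk⟩ : ∃ k : ℝ, k = 1 / (2 * (2 + a ^ 2)) := ⟨_, rfl⟩
  have hk0 : 0 < k := by rw [hk]; positivity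
  have hk1 : k ≤ 1 / 4 := by
    rw [hk, div_le_div_iff₀ (by positivity) (by norm_num)]; nlinarith
  obtain ⟨ν, hν⟩ : ∃ ν : ℝ, ν = min (k / 256) (a / 32) := ⟨_, rfl⟩
  have hν0 : 0 < ν := by rw [hν]; exact lt_min (by positivity) (by positivity)
  have hν1 : ν ≤ k / 256 := by rw [hν]; exact min_le_left _ _
  have hν2 : ν ≤ a / 32 := by rw [hν]; exact min_le_right _ _
  refine ⟨k * ν, by positivity, by nlinarith, fun ξ u hu h1 h2 => ?_⟩
  rcases le_total ξ ξ₀ with h | h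
  · rw [max_eq_right (by linarith)]
    have h3 : 0 ≤ ∫ t in Ioi (0:ℝ), ‖u t‖ ^ 2 := integral_nonneg fun t => by positivity
    have := mul_le_mul_of_nonneg_right (Theta0_le ξ) h3
    have := deGennes_le ξ u hu h1 h2
    linarith
  · rw [max_eq_left (by linarith)]
    obtain ⟨s, hs⟩ : ∃ s : ℝ, s = ξ - ξ₀ := ⟨_, rfl⟩
    have hs0 : 0 ≤ s := by linarith
    have hξ : ξ = s - a := by linarith
    rw [← hs]
    rcases le_total s (4 * a) with h4 | h4
    · rw [mul_assoc]
      have hs2 : s ^ 2 ≤ 16 := by nlinarith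
      refine super F Theta0 Theta0_nonneg Theta0_lt_one hF hge hsq hnn a k (ν * s ^ 2) ξ hk
        (by positivity) ?_ (by linarith) ha0.le ?_ u hu h1 h2
      · nlinarith
      · rw [hξ]
        rcases le_total s (2 * a) with h5 | h5
        · refine le_trans ?_ (hlow s hs0)
          have : 0 ≤ s ^ 2 * (a - s / 3 - 4 * ν) := by
            apply mul_nonneg (by positivity); linarith
          linarith
        · refine le_trans ?_ (hge _)
          have : ν * s ≤ 1 / 8 := by nlinarith
          nlinarith
    · have : (Theta0 + k * ν * s ^ 2) * (∫ t in Ioi (0:ℝ), ‖u t‖ ^ 2) =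
        ∫ t in Ioi (0:ℝ), (Theta0 + k * ν * s ^ 2) * ‖u t‖ ^ 2 := by
        rw [integral_const_mul]
      rw [this]
      refine setIntegral_mono_on (h1.const_mul _) h2 measurableSet_Ioi fun t (ht : 0 < t) => ?_
      have hkn : k * ν ≤ 1 / 2 := by nlinarith
      have b : Theta0 + k * ν * s ^ 2 ≤ (t + ξ) ^ 2 := by
        rw [hTa, hξ]
        have : k * ν * s ^ 2 ≤ 1 / 2 * s ^ 2 := by gcongr
        nlinarith
      have := mul_le_mul_of_nonneg_right b (sq_nonneg ‖u t‖)
      have := sq_nonneg ‖deriv u t‖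
      linarith

lemma pot_lower (c D ε δ ρ : ℝ) (hc : 0 < c) (hc1 : c ≤ 1) (hD : 0 < D) (hε : 0 < ε)
    (hε1 : ε ≤ 1 / (8 * (5 + 4 * D))) (hε2 : ε ≤ c / 8) (hδ : |δ| ≤ D) :
    4 * ε ^ 2 ≤ c * max (δ + ρ ^ 2 / 2) 0 ^ 2 + (ε * (1 / (1 + ρ ^ 2)) - (ε * arctan ρ) ^ 2) ∧
    ∀ M, 4 * D + 4 < M → M ≤ |ρ| → c / 32 * M ^ 4 ≤
      c * max (δ + ρ ^ 2 / 2) 0 ^ 2 + (ε * (1 / (1 + ρ ^ 2)) - (ε * arctan ρ) ^ 2) := by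
  have hδ' := (abs_le.1 hδ).1
  have hK : ε * (1 / (1 + ρ ^ 2)) - 4 * ε ^ 2 ≤
      ε * (1 / (1 + ρ ^ 2)) - (ε * arctan ρ) ^ 2 := by
    have : arctan ρ ^ 2 ≤ 4 := by
      have := Real.arctan_lt_pi_div_two ρ
      have := Real.neg_pi_div_two_lt_arctan ρ
      have := Real.pi_lt_d2
      nlinarith
    rw [mul_pow]
    nlinarith [sq_nonneg ε]
  have hp : 0 ≤ ε * (1 / (1 + ρ ^ 2)) := by positivity
  have hV : 4 * D + 4 ≤ ρ ^ 2 → ρ ^ 2 / 4 ≤ max (δ + ρ ^ 2 / 2) 0 := fun h =>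
    le_trans (by linarith) (le_max_left _ _)
  constructor
  · rcases le_total (ρ ^ 2) (4 * D + 4) with h | h
    · have h1 : 8 * ε ≤ 1 / (1 + ρ ^ 2) := by
        rw [le_div_iff₀ (by positivity)] at hε1 ⊢
        nlinarith
      have h2 := mul_le_mul_of_nonneg_left h1 hε.le
      have h3 : 0 ≤ c * max (δ + ρ ^ 2 / 2) 0 ^ 2 := by positivity
      nlinarith
    · have h1 := hV h
      have h2 : 1 ≤ max (δ + ρ ^ 2 / 2) 0 := by linarith
      have h3 : 1 ≤ max (δ + ρ ^ 2 / 2) 0 ^ 2 := one_le_pow₀ h2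
      nlinarith
  · intro M hM hρ
    have hM0 : 4 ≤ M := by linarith
    have hM2 : M ^ 2 ≤ ρ ^ 2 := by
      rw [← sq_abs ρ]; exact pow_le_pow_left₀ (by linarith) hρ 2
    have h1 := hV (by nlinarith)
    have h2 : M ^ 2 / 4 ≤ max (δ + ρ ^ 2 / 2) 0 := by linarith
    have h3 : (M ^ 2 / 4) ^ 2 ≤ max (δ + ρ ^ 2 / 2) 0 ^ 2 :=
      pow_le_pow_left₀ (by positivity) h2 2
    have h4 := mul_le_mul_of_nonneg_left h3 hc.le
    have h5 : (2:ℝ) ≤ M ^ 4 := by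
      have := pow_le_pow_left₀ (by norm_num) hM0 4
      norm_num at this; linarith
    have h6 : 4 * ε ^ 2 ≤ c / 32 * 2 := by
      have a1 : ε ≤ 1 / 8 := by linarith
      have a2 := mul_le_mul hε2 a1 hε.le (by positivity)
      nlinarith
    have h7 : c / 32 * 2 ≤ c / 32 * M ^ 4 := by gcongr
    have h8 : c * (M ^ 2 / 4) ^ 2 = 2 * (c / 32 * M ^ 4) := by ring
    linarith

set_option maxHeartbeats 1600000 in
/-- Lemma 2.11: lower bound `q_m[ψ] ≥ ∫ W_B(ρ)|ψ|²` for bounded `δ̃₁`. -/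
theorem statement7
    (ξ₀ : ℝ) (hξ₀ : deGennes ξ₀ = Theta0)
    (hξ₀uniq : ∀ ξ : ℝ, deGennes ξ = Theta0 → ξ = ξ₀)
    (D : ℝ) (hD : 0 < D) :
    ∃ C₁ C₂ Mt B₀ : ℝ, 0 < C₁ ∧ 0 < C₂ ∧ 0 < Mt ∧ 0 < B₀ ∧
      ∀ M : ℝ, Mt < M → ∀ B : ℝ, B₀ < B → ∀ m : ℤ,
        |delta1 B m ξ₀| ≤ D →
        ∀ ψ : ℝ × ℝ → ℂ, InFormDomain B m ψ →
          (∫ p in halfPlane,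
              (if |p.2| < M then Theta0 + C₁ * B ^ (-(1:ℝ)/3)
                else Theta0 + C₂ * M ^ 4 * B ^ (-(1:ℝ)/3)) * ‖ψ p‖ ^ 2)
            ≤ qForm B m ψ := by
  obtain ⟨c, hc, hc1, H⟩ := main1d ξ₀ hξ₀
  obtain ⟨ε, hεd⟩ : ∃ ε : ℝ, ε = min (1 / (8 * (5 + 4 * D))) (c / 8) := ⟨_, rfl⟩
  have hε : 0 < ε := by rw [hεd]; exact lt_min (by positivity) (by positivity)
  have hε1 : ε ≤ 1 / (8 * (5 + 4 * D)) := by rw [hεd]; exact min_le_left _ _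
  have hε2 : ε ≤ c / 8 := by rw [hεd]; exact min_le_right _ _
  refine ⟨4 * ε ^ 2, c / 32, 4 * D + 4, 1, by positivity, by positivity, by positivity, one_pos,
    fun M hM B hB m hδ ψ hψ => ?_⟩
  obtain ⟨hψC, hψ2, hψq⟩ := hψ
  have hB0 : 0 < B := by linarith
  obtain ⟨b, hb⟩ : ∃ b : ℝ, b = B ^ (-(1:ℝ)/6) := ⟨_, rfl⟩
  have hb0 : 0 < b := by rw [hb]; positivity
  have hb2 : B ^ (-(1:ℝ)/3) = b ^ 2 := by
    rw [hb, ← Real.rpow_natCast, ← Real.rpow_mul hB0.le]; norm_num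
  obtain ⟨δ, hδd⟩ : ∃ δ : ℝ, δ = delta1 B m ξ₀ := ⟨_, rfl⟩
  rw [← hδd] at hδ
  obtain ⟨x, hx⟩ : ∃ x : ℝ, x = ((m : ℝ) - B / 2) / Real.sqrt B := ⟨_, rfl⟩
  have hxδ : x - ξ₀ = b * δ := by
    have : b * B ^ ((1:ℝ)/6) = 1 := by
      rw [hb, ← Real.rpow_add hB0]; norm_num
    rw [hδd, delta1, ← hx]
    linear_combination (-(x - ξ₀)) * this
  have hpot : ∀ p : ℝ × ℝ, qPot B m p = (p.1 + (x + b * p.2 ^ 2 / 2)) ^ 2 := by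
    intro p
    rw [qPot, ← hx, ← hb, add_assoc]
  have hP : (volume : Measure (ℝ × ℝ)).restrict halfPlane =
      (volume.restrict (Ioi (0:ℝ))).prod volume := by
    rw [halfPlane, Measure.volume_eq_prod, ← Measure.prod_restrict, Measure.restrict_univ]
  have hmp : MeasurableSet halfPlane := measurableSet_Ioi.prod MeasurableSet.univ
  -- continuity
  have hψc : Continuous ψ := hψC.continuous
  have hfc : Continuous (fderiv ℝ ψ) := hψC.continuous_fderiv one_ne_zero
  have hτc : Continuous (fun p => fderiv ℝ ψ p (1, 0)) := hfc.clm_apply continuous_const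
  have hρc : Continuous (fun p => fderiv ℝ ψ p (0, 1)) := hfc.clm_apply continuous_const
  have hpc : Continuous (qPot B m) := by
    have : qPot B m = fun p => (p.1 + (x + b * p.2 ^ 2 / 2)) ^ 2 := funext hpot
    rw [this]; fun_prop
  have hpn : ∀ p, 0 ≤ qPot B m p := fun p => by rw [hpot]; positivity
  have hβ : 0 < B ^ (-(1:ℝ)/3) := by positivity
  have It : IntegrableOn (fun p => ‖fderiv ℝ ψ p (1, 0)‖ ^ 2 + qPot B m p * ‖ψ p‖ ^ 2)
      halfPlane := by
    refine Integrable.mono' hψq (by fun_prop) (ae_of_all _ fun p => ?_)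
    have := hpn p
    rw [Real.norm_of_nonneg (by positivity), qIntegrand]
    have : 0 ≤ B ^ (-(1:ℝ)/3) * ‖fderiv ℝ ψ p (0, 1)‖ ^ 2 := by positivity
    linarith
  have Ir : IntegrableOn (fun p => ‖fderiv ℝ ψ p (0, 1)‖ ^ 2) halfPlane := by
    have : IntegrableOn (fun p => B ^ (-(1:ℝ)/3) * ‖fderiv ℝ ψ p (0, 1)‖ ^ 2) halfPlane := by
      refine Integrable.mono' hψq (by fun_prop) (ae_of_all _ fun p => ?_)
      have := hpn p
      rw [Real.norm_of_nonneg (by positivity), qIntegrand]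
      have : 0 ≤ qPot B m p * ‖ψ p‖ ^ 2 := by positivity
      have : 0 ≤ ‖fderiv ℝ ψ p (1, 0)‖ ^ 2 := by positivity
      linarith
    refine (this.const_mul (B ^ (-(1:ℝ)/3))⁻¹).congr (ae_of_all _ fun p => ?_)
    simp only
    field_simp
  have hVc : Continuous (fun p : ℝ × ℝ => max (x + b * p.2 ^ 2 / 2 - ξ₀) 0) :=
    Continuous.max (by fun_prop) continuous_const
  have Iv : IntegrableOn (fun p => (Theta0 + c * max (x + b * p.2 ^ 2 / 2 - ξ₀) 0 ^ 2)
      * ‖ψ p‖ ^ 2) halfPlane := by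
    refine Integrable.mono' ((hψ2.const_mul (Theta0 + c * (4 * ξ₀ ^ 2))).add
      (It.const_mul (4 * c))) (Continuous.aestronglyMeasurable
        ((continuous_const.add (continuous_const.mul (hVc.pow 2))).mul (hψc.norm.pow 2))) ?_
    refine (ae_restrict_iff' hmp).2 (ae_of_all _ fun p hp => ?_)
    have hp1 : 0 < p.1 := hp.1
    have hT := Theta0_nonneg
    have hnn : 0 ≤ (Theta0 + c * max (x + b * p.2 ^ 2 / 2 - ξ₀) 0 ^ 2) * ‖ψ p‖ ^ 2 :=
      mul_nonneg (add_nonneg hT (mul_nonneg hc.le (sq_nonneg _))) (sq_nonneg _)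
    rw [Real.norm_of_nonneg hnn]
    simp only [Pi.add_apply]
    obtain ⟨z, hz⟩ : ∃ z : ℝ, z = x + b * p.2 ^ 2 / 2 - ξ₀ := ⟨_, rfl⟩
    have hpz : qPot B m p = (p.1 + (z + ξ₀)) ^ 2 := by rw [hpot, hz]; ring
    have key : max z 0 ^ 2 ≤ 4 * ξ₀ ^ 2 + 4 * qPot B m p := by
      rw [hpz]
      rcases le_total z 0 with h | h
      · rw [max_eq_right h]
        nlinarith [sq_nonneg ξ₀, sq_nonneg (p.1 + (z + ξ₀))]
      · rw [max_eq_left h]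
        rcases le_total z (2 * |ξ₀|) with h' | h'
        · have : z ^ 2 ≤ (2 * |ξ₀|) ^ 2 := pow_le_pow_left₀ h h' 2
          rw [mul_pow, sq_abs] at this
          nlinarith [sq_nonneg (p.1 + (z + ξ₀))]
        · have h3 : z / 2 ≤ p.1 + (z + ξ₀) := by linarith [neg_abs_le ξ₀]
          have : (z / 2) ^ 2 ≤ (p.1 + (z + ξ₀)) ^ 2 := pow_le_pow_left₀ (by linarith) h3 2
          nlinarith [sq_nonneg ξ₀]
    rw [← hz]
    have h5 := mul_le_mul_of_nonneg_right (mul_le_mul_of_nonneg_left key hc.le)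
      (sq_nonneg ‖ψ p‖)
    have h6 : 0 ≤ c * ‖fderiv ℝ ψ p (1, 0)‖ ^ 2 := by positivity
    linarith
  -- the Riccati function in the second variable
  have hKc : Continuous (fun ρ : ℝ => ε * (1 / (1 + ρ ^ 2))) :=
    continuous_const.mul (continuous_const.div (by fun_prop) fun t => by positivity)
  have hε8 : ε ≤ 1 / 8 := by linarith
  have hb1 : ∀ ρ : ℝ, |ε * arctan ρ| ≤ 1 := by
    intro ρ
    have := Real.arctan_lt_pi_div_two ρ
    have := Real.neg_pi_div_two_lt_arctan ρ
    have := Real.pi_lt_d2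
    rw [abs_le]
    constructor <;> nlinarith
  have hb1' : ∀ ρ : ℝ, |ε * (1 / (1 + ρ ^ 2))| ≤ 1 := by
    intro ρ
    have b1 : 0 ≤ 1 / (1 + ρ ^ 2) := by positivity
    have b2 : 1 / (1 + ρ ^ 2) ≤ 1 := by
      rw [div_le_one (by positivity)]; nlinarith [sq_nonneg ρ]
    rw [abs_le]
    constructor <;> nlinarith
  have Ik : IntegrableOn (fun p : ℝ × ℝ => (ε * (1 / (1 + p.2 ^ 2)) - (ε * arctan p.2) ^ 2)
      * ‖ψ p‖ ^ 2) halfPlane := by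
    refine Integrable.bdd_mul (c := 2) hψ2 ?_ (ae_of_all _ fun p => ?_)
    · refine Continuous.aestronglyMeasurable (Continuous.sub (hKc.comp continuous_snd) ?_)
      exact (continuous_const.mul (Real.continuous_arctan.comp continuous_snd)).pow 2
    · have h1 := abs_le.1 (hb1 p.2)
      have h2 := abs_le.1 (hb1' p.2)
      rw [Real.norm_eq_abs, abs_le]
      constructor <;> nlinarith
  unfold IntegrableOn at hψ2 hψq It Ir Iv Ik
  rw [hP] at hψ2 hψq It Ir Iv Ik
  have step1 : ∫ p in halfPlane, (Theta0 + c * max (x + b * p.2 ^ 2 / 2 - ξ₀) 0 ^ 2) * ‖ψ p‖ ^ 2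
      ≤ ∫ p in halfPlane, (‖fderiv ℝ ψ p (1, 0)‖ ^ 2 + qPot B m p * ‖ψ p‖ ^ 2) := by
    rw [hP, integral_prod_symm _ Iv, integral_prod_symm _ It]
    refine integral_mono_ae Iv.integral_prod_right It.integral_prod_right ?_
    filter_upwards [hψ2.prod_left_ae, It.prod_left_ae] with ρ h1 h2
    have hu : ContDiff ℝ 1 (fun t => ψ (t, ρ)) := hψC.comp (contDiff_id.prodMk contDiff_const)
    have hd : ∀ t, deriv (fun t => ψ (t, ρ)) t = fderiv ℝ ψ (t, ρ) (1, 0) := by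
      intro t
      have e : HasDerivAt (fun t : ℝ => (t, ρ)) ((1:ℝ), (0:ℝ)) t :=
        (hasDerivAt_id t).prodMk (hasDerivAt_const t ρ)
      exact ((hψC.differentiable one_ne_zero (t, ρ)).hasFDerivAt.comp_hasDerivAt t e).deriv
    have := H (x + b * ρ ^ 2 / 2) (fun t => ψ (t, ρ)) hu h1
      (by simp only [hd]; simp only [hpot] at h2; exact h2)
    simp only [hd] at this
    simp only [hpot, integral_const_mul]
    exact this
  have step2 : ∫ p in halfPlane, (ε * (1 / (1 + p.2 ^ 2)) - (ε * arctan p.2) ^ 2) * ‖ψ p‖ ^ 2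
      ≤ ∫ p in halfPlane, ‖fderiv ℝ ψ p (0, 1)‖ ^ 2 := by
    rw [hP, integral_prod _ Ik, integral_prod _ Ir]
    refine integral_mono_ae Ik.integral_prod_left Ir.integral_prod_left ?_
    filter_upwards [hψ2.prod_right_ae, Ir.prod_right_ae] with t h1 h2
    have hu : ContDiff ℝ 1 (fun ρ => ψ (t, ρ)) := hψC.comp (contDiff_const.prodMk contDiff_id)
    have hd : ∀ ρ, deriv (fun ρ => ψ (t, ρ)) ρ = fderiv ℝ ψ (t, ρ) (0, 1) := by
      intro ρ
      have e : HasDerivAt (fun ρ : ℝ => (t, ρ)) ((0:ℝ), (1:ℝ)) ρ :=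
        (hasDerivAt_const ρ t).prodMk (hasDerivAt_id ρ)
      exact ((hψC.differentiable one_ne_zero (t, ρ)).hasFDerivAt.comp_hasDerivAt ρ e).deriv
    have := aux_line (fun ρ => ε * arctan ρ) (fun ρ => ε * (1 / (1 + ρ ^ 2))) 1
      (fun ρ => (Real.hasDerivAt_arctan ρ).const_mul ε) hKc hb1 hb1' (fun ρ => ψ (t, ρ)) hu h1
      (by simp only [hd]; exact h2)
    simp only [hd] at this
    exact this
  have hq : qForm B m ψ =
      (∫ p in halfPlane, (‖fderiv ℝ ψ p (1, 0)‖ ^ 2 + qPot B m p * ‖ψ p‖ ^ 2))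
      + b ^ 2 * ∫ p in halfPlane, ‖fderiv ℝ ψ p (0, 1)‖ ^ 2 := by
    unfold qForm qIntegrand
    rw [hP, integral_add It (Ir.const_mul (B ^ (-(1:ℝ)/3))), integral_const_mul, hb2]
  have hW : (∫ p in halfPlane,
      (if |p.2| < M then Theta0 + 4 * ε ^ 2 * B ^ (-(1:ℝ)/3)
        else Theta0 + c / 32 * M ^ 4 * B ^ (-(1:ℝ)/3)) * ‖ψ p‖ ^ 2) ≤
      ∫ p in halfPlane, ((Theta0 + c * max (x + b * p.2 ^ 2 / 2 - ξ₀) 0 ^ 2) * ‖ψ p‖ ^ 2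
        + b ^ 2 * ((ε * (1 / (1 + p.2 ^ 2)) - (ε * arctan p.2) ^ 2) * ‖ψ p‖ ^ 2)) := by
    rw [hP]
    refine integral_mono_of_nonneg (ae_of_all _ fun p => ?_) (Iv.add (Ik.const_mul (b ^ 2)))
      (ae_of_all _ fun p => ?_)
    · have := Theta0_nonneg
      have hM0 : 0 < M := by linarith
      simp only [Pi.zero_apply]
      split_ifs <;> positivity
    · obtain ⟨k1, k2⟩ := pot_lower c D ε δ p.2 hc hc1 hD hε hε1 hε2 hδ
      have hmax : max (x + b * p.2 ^ 2 / 2 - ξ₀) 0 = b * max (δ + p.2 ^ 2 / 2) 0 := by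
        rw [mul_max_of_nonneg _ _ hb0.le, mul_zero]
        congr 1
        linear_combination hxδ
      simp only
      rw [hmax, ← mul_assoc, ← add_mul, hb2]
      refine mul_le_mul_of_nonneg_right ?_ (sq_nonneg _)
      have hbb : 0 ≤ b ^ 2 := by positivity
      split_ifs with h
      · have := mul_le_mul_of_nonneg_left k1 hbb
        linarith
      · have := mul_le_mul_of_nonneg_left (k2 M hM (not_lt.1 h)) hbb
        linarith
  have hsum : (∫ p in halfPlane, ((Theta0 + c * max (x + b * p.2 ^ 2 / 2 - ξ₀) 0 ^ 2) * ‖ψ p‖ ^ 2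
        + b ^ 2 * ((ε * (1 / (1 + p.2 ^ 2)) - (ε * arctan p.2) ^ 2) * ‖ψ p‖ ^ 2))) =
      (∫ p in halfPlane, (Theta0 + c * max (x + b * p.2 ^ 2 / 2 - ξ₀) 0 ^ 2) * ‖ψ p‖ ^ 2)
      + b ^ 2 * ∫ p in halfPlane, (ε * (1 / (1 + p.2 ^ 2)) - (ε * arctan p.2) ^ 2)
        * ‖ψ p‖ ^ 2 := by
    rw [hP, integral_add Iv (Ik.const_mul (b ^ 2)), integral_const_mul]
  rw [hq]
  refine hW.trans ?_
  rw [hsum]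
  exact add_le_add step1 (mul_le_mul_of_nonneg_left step2 (by positivity))
end
end
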